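/- arXiv:math/0501498 — 2 statements merged into one kernel-verified Lean document; each statement's English description precedes it below -/
import Mathlib

section
/- (Lascoux's lemma, part 1.) Let n, p ≥ 1. In the polynomial ring ℤ[x_1,…,x_n,y_1,…,y_p] one has the identity ∏_{a=1}^{n} ∏_{b=1}^{p} (1 + x_a + y_b) = ∑_{λ ⊆ (p^n)} ∑_{μ ⊆ λ} E_{λ/μ}(n) · s_μ(x_1,…,x_n) · s_{∁λ~}(y_1,…,y_p), where λ runs over all partitions with λ_1 ≤ p and l(λ) ≤ n, μ runs over partitions contained in λ, λ~ is the conjugate of λ, and ∁λ~ is the complement of λ~ in the block (n^p), i.e. (∁λ~)_b = n − (λ~)_{p+1−b} for 1 ≤ b ≤ p. -/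
/-!
STATEMENT 1 (Lascoux's lemma, part 1):
`∏_{a=1}^{n} ∏_{b=1}^{p} (1 + x_a + y_b)
   = ∑_{λ ⊆ (p^n)} ∑_{μ ⊆ λ} E_{λ/μ}(n) · s_μ(x) · s_{∁λ~}(y)`
in `ℤ[x_1,…,x_n,y_1,…,y_p]`.  Partitions are encoded 0-based as functions `ℕ → ℕ`.
The Schur polynomials `Sx` (in the x-variables) and `Sy` (in the y-variables) are
characterized by the bialternant formula (which determines them uniquely).
-/

open Finset MvPolynomial

/-- `E_{λ/μ}(n) = det[ C(λ_k + n − k, μ_l + n − l) ]_{1≤k,l≤n}` (indices written 0-based). -/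
def Edet (n : ℕ) (lam mu : ℕ → ℕ) : ℤ :=
  (Matrix.of fun k l : Fin n =>
    ((lam k + (n - 1 - (k : ℕ))).choose (mu l + (n - 1 - (l : ℕ))) : ℤ)).det

/-- The conjugate partition, 0-based: `conjP lam m = (λ~)_{m+1} = #{k : λ_k ≥ m+1}`. -/
noncomputable def conjP (lam : ℕ → ℕ) (m : ℕ) : ℕ := Nat.card {k : ℕ // m + 1 ≤ lam k}

/-- Extension of a bounded tuple to a function `ℕ → ℕ` (zero beyond the box). -/
def extF {n : ℕ} {m : Fin n → ℕ} (f : (k : Fin n) → Fin (m k + 1)) : ℕ → ℕ :=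
  fun k => if h : k < n then (f ⟨k, h⟩ : ℕ) else 0

/-- The complement `∁λ~` of the conjugate of `λ` inside the block `(n^p)`:
`(∁λ~)_b = n − (λ~)_{p+1−b}` for `1 ≤ b ≤ p` (written 0-based). -/
noncomputable def complConj (n p : ℕ) (lam : ℕ → ℕ) : ℕ → ℕ :=
  fun b => if b < p then n - conjP lam (p - 1 - b) else 0

/-!
Schur polynomials are quotients `s_λ = a_λ / a_∅` of alternants, so the identity may be multiplied
by the Vandermonde products `a_∅(x)` and `a_∅(y)`, which are not zero divisors.

Expand the Vandermonde determinant of `x₁, …, xₙ, -y₁, …, -y_p` along its first `n` rows. The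
boundary paths of the partitions `λ ⊆ (p^n)` enumerate the choices of `n` of the `n + p` columns:
the vertical steps select the exponents of `a_λ(x)`, the horizontal ones those of `a_{∁λ~}(y)`, and
the sign of the resulting shuffle is `(-1)^|∁λ~|`, which cancels the sign coming from `-y`. This is
the dual Cauchy identity `∏ (x_a + y_b) = ∑_λ s_λ(x) s_{∁λ~}(y)`.

Replacing `x_a` by `1 + x_a` does not change the Vandermonde product, and by the binomial theorem
and the Cauchy–Binet formula `a_λ(1 + x) = ∑_μ E_{λ/μ}(n) a_μ(x)`, where `E_{λ/μ}(n)` vanishes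
unless `μ ⊆ λ`.
-/

section OrderEmbedding

variable {n : ℕ} {γ : Type*} [LinearOrder γ]

theorem injective_orderEmbedding_comp_perm :
    Function.Injective fun q : (Fin n ↪o γ) × Equiv.Perm (Fin n) => (q.1 ∘ q.2 : Fin n → γ) := by
  rintro ⟨g, σ⟩ ⟨g', σ'⟩ (h : ⇑g ∘ ⇑σ = ⇑g' ∘ ⇑σ')
  obtain rfl : g = g' := by
    rw [← OrderEmbedding.range_inj, ← σ.surjective.range_comp g, h, σ'.surjective.range_comp]
  exact Prod.ext rfl (Equiv.ext fun a => g.injective (congrFun h a))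

theorem exists_orderEmbedding_comp_perm_eq {f : Fin n → γ} (hf : Function.Injective f) :
    ∃ (g : Fin n ↪o γ) (σ : Equiv.Perm (Fin n)), g ∘ σ = f := by
  have hsort : StrictMono (f ∘ Tuple.sort f) :=
    (Tuple.monotone_sort f).strictMono_of_injective (hf.comp (Tuple.sort f).injective)
  refine ⟨OrderEmbedding.ofStrictMono _ hsort, (Tuple.sort f)⁻¹, ?_⟩
  ext a
  simp

end OrderEmbedding

theorem bijective_mul_of_bijective_mk {ι G K : Type*} [Group G] [Group K] {f : K →* G}
    (hf : Function.Injective f) {s : ι → G}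
    (hs : Function.Bijective fun i => (s i : G ⧸ f.range)) :
    Function.Bijective fun q : ι × K => s q.1 * f q.2 := by
  constructor
  · rintro ⟨i, k⟩ ⟨j, l⟩ (h : s i * f k = s j * f l)
    obtain rfl : i = j := hs.injective <| by
      rw [← QuotientGroup.mk_mul_of_mem (s i) (f.mem_range.2 ⟨k, rfl⟩), h,
        QuotientGroup.mk_mul_of_mem (s j) (f.mem_range.2 ⟨l, rfl⟩)]
    exact Prod.ext rfl (hf (mul_left_cancel h))
  · intro g
    obtain ⟨i, hi⟩ := hs.surjective g
    obtain ⟨k, hk⟩ := QuotientGroup.eq.1 hi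
    exact ⟨(i, k), by simp [hk]⟩

section DeterminantExpansions

variable {R : Type*} [CommRing R]

theorem det_mul_eq_sum_fun {α γ : Type*} [Fintype α] [DecidableEq α] [Fintype γ]
    (A : Matrix α γ R) (B : Matrix γ α R) :
    (A * B).det = ∑ f : α → γ, (A.submatrix id f).det * ∏ i, B (f i) i := by
  classical
  simp only [Matrix.det_apply', Matrix.mul_apply, prod_univ_sum, mul_sum, sum_mul,
    Fintype.piFinset_univ, prod_mul_distrib, Matrix.submatrix_apply, id, mul_assoc]
  exact sum_comm

theorem det_mul_eq_sum_orderEmbedding {n : ℕ} {γ : Type*} [Fintype γ] [LinearOrder γ]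
    (A : Matrix (Fin n) γ R) (B : Matrix γ (Fin n) R) :
    (A * B).det = ∑ g : Fin n ↪o γ, (A.submatrix id g).det * (B.submatrix g id).det := by
  calc (A * B).det
      = ∑ f : Fin n → γ, (A.submatrix id f).det * ∏ i, B (f i) i := det_mul_eq_sum_fun A B
    _ = ∑ q : (Fin n ↪o γ) × Equiv.Perm (Fin n),
          (A.submatrix id (q.1 ∘ q.2)).det * ∏ i, B (q.1 (q.2 i)) i := by
        refine (Fintype.sum_of_injective _ injective_orderEmbedding_comp_perm _ _ ?_
          fun q => rfl).symm
        intro f hf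
        obtain ⟨i, j, hij, hne⟩ : ∃ i j, f i = f j ∧ i ≠ j := by
          by_contra! hinj
          obtain ⟨g, σ, h⟩ := exists_orderEmbedding_comp_perm_eq (f := f) hinj
          exact hf ⟨(g, σ), h⟩
        rw [Matrix.det_zero_of_column_eq hne fun k => by simp [hij], zero_mul]
    _ = ∑ g : Fin n ↪o γ, (A.submatrix id g).det * (B.submatrix g id).det := by
        rw [Fintype.sum_prod_type]
        refine sum_congr rfl fun g _ => ?_
        rw [Matrix.det_apply' (B.submatrix g id), mul_sum]
        refine sum_congr rfl fun σ _ => ?_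
        have hσ := Matrix.det_permute' σ (A.submatrix id g)
        rw [Matrix.submatrix_submatrix, Function.comp_id] at hσ
        rw [hσ, mul_comm (_ : R) (A.submatrix id g).det, mul_assoc]
        rfl

/-- In this form of the Laplace expansion along the rows `Sum.inl a`, the set of columns chosen for
these rows is recorded by a left coset of the Young subgroup. -/
theorem det_eq_sum_sign_mul_det_mul_det {ι α β : Type*} [Fintype ι] [Fintype α] [DecidableEq α]
    [Fintype β] [DecidableEq β] {S : ι → Equiv.Perm (α ⊕ β)}
    (hS : Function.Bijective fun i =>
      (S i : Equiv.Perm (α ⊕ β) ⧸ (Equiv.Perm.sumCongrHom α β).range))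
    (M : Matrix (α ⊕ β) (α ⊕ β) R) :
    M.det = ∑ i, ((Equiv.Perm.sign (S i) : ℤ) : R) *
      (M.submatrix Sum.inl (S i ∘ Sum.inl)).det * (M.submatrix Sum.inr (S i ∘ Sum.inr)).det := by
  have hbij := bijective_mul_of_bijective_mk Equiv.Perm.sumCongrHom_injective hS
  rw [← Matrix.det_transpose, Matrix.det_apply', ← hbij.sum_comp, Fintype.sum_prod_type]
  refine sum_congr rfl fun i _ => ?_
  rw [← Matrix.det_transpose (M.submatrix Sum.inl _),
    ← Matrix.det_transpose (M.submatrix Sum.inr _), Matrix.det_apply', Matrix.det_apply',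
    mul_assoc, sum_mul_sum, mul_sum, Fintype.sum_prod_type]
  refine sum_congr rfl fun σ _ => ?_
  rw [mul_sum]
  refine sum_congr rfl fun τ _ => ?_
  simp only [Equiv.Perm.sign_mul, Equiv.Perm.sumCongrHom_apply, Equiv.Perm.sign_sumCongr,
    Units.val_mul, Int.cast_mul, Fintype.prod_sum_type, Matrix.transpose_apply,
    Matrix.submatrix_apply, Equiv.Perm.mul_apply, Equiv.Perm.sumCongr_apply, Sum.map_inl,
    Sum.map_inr, Function.comp_apply]
  ring

end DeterminantExpansions

section FinAdd

variable {n p : ℕ}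

theorem prod_Ioi_add {M : Type*} [CommMonoid M] (f : Fin (n + p) → Fin (n + p) → M) :
    ∏ i, ∏ j ∈ Ioi i, f i j =
      (∏ i, ∏ j ∈ Ioi i, f (Fin.castAdd p i) (Fin.castAdd p j)) *
      (∏ i, ∏ j ∈ Ioi i, f (Fin.natAdd n i) (Fin.natAdd n j)) *
      ∏ a, ∏ b, f (Fin.castAdd p a) (Fin.natAdd n b) := by
  have hcross (a : Fin n) (b : Fin p) : Fin.castAdd p a < Fin.natAdd n b := by
    simp only [Fin.lt_def, Fin.val_castAdd, Fin.val_natAdd]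
    omega
  simp only [← filter_lt_eq_Ioi, prod_filter, Fin.prod_univ_add, prod_mul_distrib,
    (Fin.strictMono_castAdd p).lt_iff_lt, Fin.natAdd_lt_natAdd_iff, hcross,
    (hcross _ _).not_gt, if_true, if_false, prod_const_one, mul_one]
  rw [← mul_assoc, mul_right_comm]

theorem sign_eq_prod_of_strictMono (σ : Equiv.Perm (Fin (n + p)))
    (hl : StrictMono (σ ∘ Fin.castAdd p)) (hr : StrictMono (σ ∘ Fin.natAdd n)) :
    Equiv.Perm.sign σ =
      ∏ a, ∏ b, if σ (Fin.castAdd p a) < σ (Fin.natAdd n b) then 1 else -1 := by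
  rw [Equiv.Perm.sign_eq_prod_prod_Ioi, prod_Ioi_add]
  have hleft : ∏ i, ∏ j ∈ Ioi i,
      (if σ (Fin.castAdd p i) < σ (Fin.castAdd p j) then (1 : ℤˣ) else -1) = 1 :=
    prod_eq_one fun i _ => prod_eq_one fun j hj => if_pos (hl (mem_Ioi.1 hj))
  have hright : ∏ i, ∏ j ∈ Ioi i,
      (if σ (Fin.natAdd n i) < σ (Fin.natAdd n j) then (1 : ℤˣ) else -1) = 1 :=
    prod_eq_one fun i _ => prod_eq_one fun j hj => if_pos (hr (mem_Ioi.1 hj))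
  rw [hleft, hright, one_mul, one_mul]

theorem le_orderEmbedding_apply (g : Fin n ↪o Fin p) (k : Fin n) : (k : ℕ) ≤ g k := by
  simpa using card_le_card_of_injOn (s := Iio k) (t := Iio (g k)) g (by intro; simp)
    g.injective.injOn

theorem sub_le_orderEmbedding_apply_sub (g : Fin n ↪o Fin p) (a b : Fin n) :
    (b : ℕ) - a ≤ (g b : ℕ) - g a := by
  simpa using card_le_card_of_injOn (s := Ico a b) (t := Ico (g a) (g b)) g (by intro; simp)
    g.injective.injOn

theorem orderEmbedding_apply_le_add (g : Fin n ↪o Fin (n + p)) (k : Fin n) :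
    (g k : ℕ) ≤ p + k := by
  have hcard := card_le_card_of_injOn (s := Ioi k) (t := Ioi (g k)) g (by intro; simp)
    g.injective.injOn
  simp only [Fin.card_Ioi] at hcard
  omega

end FinAdd

section Alternant

variable {n : ℕ} {R : Type*} [CommRing R]

/-- The alternant `a_{λ+δ}(x₁, …, xₙ) = det (x_a ^ (λ_b + n - b))`, the numerator of the
bialternant formula for the Schur polynomial `s_λ`; the denominator is `alternant x 0`. -/
def alternant (x : Fin n → R) (lam : ℕ → ℕ) : R :=
  (Matrix.of fun a b : Fin n => x a ^ (lam b + (n - 1 - (b : ℕ)))).det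

theorem map_alternant {S : Type*} [CommRing S] (f : R →+* S) (x : Fin n → R) (lam : ℕ → ℕ) :
    f (alternant x lam) = alternant (f ∘ x) lam := by
  rw [alternant, f.map_det, alternant]
  congr 1
  ext a b
  simp

theorem alternant_zero_eq_prod_Ioi (x : Fin n → R) :
    alternant x 0 = ∏ i, ∏ j ∈ Ioi i, (x i - x j) := by
  have h := Matrix.det_projVandermonde 1 x
  simp only [Pi.one_apply, one_mul] at h
  rw [← h, alternant]
  congr 1
  ext a b
  simp only [Matrix.of_apply, Matrix.projVandermonde_apply, Pi.zero_apply, Pi.one_apply, one_pow,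
    one_mul, zero_add, Fin.val_rev]
  congr 1
  omega

theorem alternant_zero_eq_prod_filter (x : Fin n → R) :
    alternant x 0 = ∏ q ∈ univ.filter fun q : Fin n × Fin n => q.1 < q.2, (x q.1 - x q.2) := by
  simp only [alternant_zero_eq_prod_Ioi, ← filter_lt_eq_Ioi, prod_filter, Fintype.prod_prod_type]

theorem alternant_one_add_zero (x : Fin n → R) :
    alternant (fun a => 1 + x a) 0 = alternant x 0 := by
  simp only [alternant_zero_eq_prod_Ioi, add_sub_add_left_eq_sub]

theorem alternant_append_zero {p : ℕ} (x : Fin n → R) (y : Fin p → R) :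
    alternant (Fin.append x y) 0 =
      alternant x 0 * alternant y 0 * ∏ a, ∏ b, (x a - y b) := by
  simp only [alternant_zero_eq_prod_Ioi, prod_Ioi_add, Fin.append_left, Fin.append_right]

theorem alternant_neg (x : Fin n → R) (lam : ℕ → ℕ) :
    alternant (-x) lam =
      (-1) ^ (∑ b : Fin n, lam b) * (-1) ^ (∑ b : Fin n, (n - 1 - (b : ℕ))) *
        alternant x lam := by
  rw [← pow_add, ← sum_add_distrib, ← prod_pow_eq_pow_sum, alternant, alternant,
    ← Matrix.det_mul_row]
  congr 1
  ext a b
  simp only [Matrix.of_apply, Pi.neg_apply, neg_pow (x a)]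

end Alternant

section PartitionEncoding

variable {n : ℕ}

theorem antitone_extF {m : Fin n → ℕ} {f : (k : Fin n) → Fin (m k + 1)}
    (hf : ∀ a b : Fin n, a ≤ b → (f b : ℕ) ≤ f a) : Antitone (extF f) := by
  intro a b hab
  by_cases hb : b < n
  · simpa only [extF, hb, hab.trans_lt hb, dif_pos] using hf ⟨a, hab.trans_lt hb⟩ ⟨b, hb⟩ hab
  · simp [extF, hb]

theorem extF_of_le {m : Fin n → ℕ} (f : (k : Fin n) → Fin (m k + 1)) {k : ℕ} (hk : n ≤ k) :
    extF f k = 0 :=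
  dif_neg hk.not_gt

theorem extF_apply {m : Fin n → ℕ} (f : (k : Fin n) → Fin (m k + 1)) (k : Fin n) :
    extF f k = f k :=
  dif_pos k.2

variable {lam mu : ℕ → ℕ}

theorem lt_conjP_iff (hlam : Antitone lam) (hzero : ∀ k, n ≤ k → lam k = 0) {k m : ℕ} :
    k < conjP lam m ↔ m < lam k := by
  classical
  have hex : ∃ c, lam c ≤ m := ⟨n, by simp [hzero]⟩
  have hlt (k : ℕ) : m < lam k ↔ k < Nat.find hex :=
    ⟨fun h => not_le.1 fun hk => ((hlam hk).trans (Nat.find_spec hex)).not_gt h,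
      fun h => not_le.1 (Nat.find_min hex h)⟩
  have hconj : conjP lam m = Nat.find hex :=
    calc conjP lam m = Nat.card (Set.Iio (Nat.find hex)) :=
          Nat.card_congr (Equiv.subtypeEquivRight hlt)
      _ = Nat.find hex := by simp
  rw [hconj, hlt]

theorem conjP_le (hlam : Antitone lam) (hzero : ∀ k, n ≤ k → lam k = 0) (m : ℕ) :
    conjP lam m ≤ n := by
  by_contra! h
  simpa [hzero] using (lt_conjP_iff hlam hzero).1 h

theorem antitone_conjP (hlam : Antitone lam) (hzero : ∀ k, n ≤ k → lam k = 0) :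
    Antitone (conjP lam) := by
  intro m m' hm
  by_contra! h
  exact lt_irrefl _ <|
    (lt_conjP_iff hlam hzero).2 (hm.trans_lt ((lt_conjP_iff hlam hzero).1 h))

theorem antitone_complConj (p : ℕ) (hlam : Antitone lam) (hzero : ∀ k, n ≤ k → lam k = 0) :
    Antitone (complConj n p lam) := by
  intro a b hab
  by_cases hb : b < p
  · have hconj := antitone_conjP hlam hzero (show p - 1 - b ≤ p - 1 - a by omega)
    simp only [complConj, hb, hab.trans_lt hb, if_true]
    omega
  · simp [complConj, hb]

theorem complConj_of_le {p k : ℕ} (hk : p ≤ k) : complConj n p lam k = 0 :=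
  if_neg hk.not_gt

/-- Rows `k ≥ i` of the matrix vanish in columns `l ≤ i`, so every term of the determinant has a
zero factor. -/
theorem Edet_eq_zero_of_lt (hlam : Antitone lam) (hmu : Antitone mu) {i : Fin n}
    (hi : lam i < mu i) : Edet n lam mu = 0 := by
  rw [Edet, Matrix.det_apply']
  refine sum_eq_zero fun σ _ => ?_
  obtain ⟨l, hl, hσl⟩ : ∃ l : Fin n, l ≤ i ∧ i ≤ σ l := by
    by_contra! h
    have hcard := card_le_card_of_injOn (s := Iic i) (t := Iio i) σ
      (fun l hl => by simpa using h l (by simpa using hl)) σ.injective.injOn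
    simp at hcard
  have hlam_le : lam (σ l) ≤ lam i := hlam hσl
  have hmu_le : mu i ≤ mu l := hmu hl
  rw [prod_eq_zero (mem_univ l), mul_zero]
  rw [Matrix.of_apply, Nat.choose_eq_zero_of_lt, Nat.cast_zero]
  simp only [Fin.le_def] at hl hσl
  omega

end PartitionEncoding

/-- The partitions contained in the block `(p^n)`, as weakly decreasing tuples. -/
abbrev BoxPartition (n p : ℕ) :=
  {lam : Fin n → Fin (p + 1) // ∀ a b : Fin n, a ≤ b → lam b ≤ lam a}

namespace BoxPartition

variable {n p : ℕ}

/-- The sequence of parts of a partition, padded with zeros. -/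
def parts (lam : BoxPartition n p) : ℕ → ℕ := extF (m := fun _ => p) lam.1

variable (lam : BoxPartition n p)

theorem parts_apply (k : Fin n) : lam.parts k = lam.1 k := extF_apply _ k

theorem antitone_parts : Antitone lam.parts := antitone_extF lam.2

theorem parts_of_le (k : ℕ) (hk : n ≤ k) : lam.parts k = 0 := extF_of_le _ hk

theorem parts_le (k : Fin n) : lam.parts k ≤ p := by
  rw [parts_apply]
  exact (lam.1 k).is_le

theorem conjP_parts_le (m : ℕ) : conjP lam.parts m ≤ n :=
  conjP_le lam.antitone_parts lam.parts_of_le m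

/-- The boundary of the Young diagram of `λ` in the block `(p^n)`, read from the top right corner,
is a path of `n + p` unit steps; `lam.verticalStep k` is the position of the step along row `k`. -/
def verticalStep : Fin n ↪o Fin (n + p) :=
  OrderEmbedding.ofStrictMono (fun k => ⟨p - lam.parts k + k, by omega⟩) fun a b hab => by
    have := lam.antitone_parts (show (a : ℕ) ≤ b from hab.le)
    simp only [Fin.lt_def] at hab ⊢
    omega

theorem val_verticalStep (k : Fin n) : (lam.verticalStep k : ℕ) = p - lam.parts k + k := rfl

/-- The position of the step under column `p - 1 - b` of the boundary path of `λ`; see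
`BoxPartition.verticalStep`. -/
noncomputable def horizontalStep : Fin p ↪o Fin (n + p) :=
  OrderEmbedding.ofStrictMono
    (fun b => ⟨conjP lam.parts (p - 1 - b) + b, by have := lam.conjP_parts_le (p - 1 - b); omega⟩)
    fun a b hab => by
      simp only [Fin.lt_def] at hab ⊢
      have := antitone_conjP lam.antitone_parts lam.parts_of_le
        (show p - 1 - (b : ℕ) ≤ p - 1 - a by omega)
      omega

theorem val_horizontalStep (b : Fin p) :
    (lam.horizontalStep b : ℕ) = conjP lam.parts (p - 1 - b) + b := rfl

theorem sub_verticalStep (k : Fin n) :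
    n + p - 1 - (lam.verticalStep k : ℕ) = lam.parts k + (n - 1 - k) := by
  have := lam.parts_le k
  rw [val_verticalStep]
  omega

theorem sub_horizontalStep (b : Fin p) :
    n + p - 1 - (lam.horizontalStep b : ℕ) = complConj n p lam.parts b + (p - 1 - b) := by
  have := lam.conjP_parts_le (p - 1 - b)
  rw [val_horizontalStep, complConj, if_pos b.2]
  omega

theorem bijective_verticalStep :
    Function.Bijective (verticalStep : BoxPartition n p → (Fin n ↪o Fin (n + p))) := by
  constructor
  · intro lam mu h
    ext k
    have hk := congrArg Fin.val (DFunLike.congr_fun h k)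
    have := lam.parts_le k
    have := mu.parts_le k
    rw [val_verticalStep, val_verticalStep] at hk
    rw [← parts_apply, ← parts_apply]
    omega
  · intro g
    refine ⟨⟨fun k => ⟨p + k - g k, ?_⟩, fun a b hab => ?_⟩, ?_⟩
    · have := le_orderEmbedding_apply g k
      omega
    · have := sub_le_orderEmbedding_apply_sub g a b
      have := g.monotone hab
      simp only [Fin.le_def] at *
      omega
    · ext k
      have := le_orderEmbedding_apply g k
      have := orderEmbedding_apply_le_add g k
      rw [val_verticalStep, parts_apply]
      dsimp only
      omega

theorem verticalStep_lt_horizontalStep_iff {k : Fin n} {b : Fin p} :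
    lam.verticalStep k < lam.horizontalStep b ↔ (k : ℕ) < conjP lam.parts (p - 1 - b) := by
  have hconj := lt_conjP_iff lam.antitone_parts lam.parts_of_le (k := k) (m := p - 1 - b)
  have := lam.parts_le k
  rw [Fin.lt_def, val_verticalStep, val_horizontalStep]
  omega

theorem verticalStep_ne_horizontalStep (k : Fin n) (b : Fin p) :
    lam.verticalStep k ≠ lam.horizontalStep b := by
  have hconj := lt_conjP_iff lam.antitone_parts lam.parts_of_le (k := k) (m := p - 1 - b)
  have := lam.parts_le k
  rw [Ne, Fin.ext_iff, val_verticalStep, val_horizontalStep]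
  omega

/-- The Grassmannian permutation of `λ`, which sends the rows and columns of the block `(p^n)` to
the corresponding steps of the boundary path. -/
noncomputable def shuffle : Equiv.Perm (Fin n ⊕ Fin p) :=
  (Equiv.ofBijective (Sum.elim lam.verticalStep lam.horizontalStep)
    ((Fintype.bijective_iff_injective_and_card _).2
      ⟨lam.verticalStep.injective.sumElim lam.horizontalStep.injective
        lam.verticalStep_ne_horizontalStep, by simp⟩)).trans finSumFinEquiv.symm

theorem finSumFinEquiv_shuffle_inl (k : Fin n) :
    finSumFinEquiv (lam.shuffle (Sum.inl k)) = lam.verticalStep k := by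
  simp [shuffle]

theorem finSumFinEquiv_shuffle_inr (b : Fin p) :
    finSumFinEquiv (lam.shuffle (Sum.inr b)) = lam.horizontalStep b := by
  simp [shuffle]

theorem sign_shuffle :
    Equiv.Perm.sign lam.shuffle = (-1) ^ ∑ b : Fin p, complConj n p lam.parts b := by
  have hleft (k : Fin n) : finSumFinEquiv.permCongr lam.shuffle (Fin.castAdd p k) =
      lam.verticalStep k := by
    simp [← finSumFinEquiv_shuffle_inl]
  have hright (b : Fin p) : finSumFinEquiv.permCongr lam.shuffle (Fin.natAdd n b) =
      lam.horizontalStep b := by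
    simp [← finSumFinEquiv_shuffle_inr]
  rw [← Equiv.Perm.sign_permCongr finSumFinEquiv, sign_eq_prod_of_strictMono, prod_comm,
    ← prod_pow_eq_pow_sum]
  · refine prod_congr rfl fun b _ => ?_
    simp only [hleft, hright, verticalStep_lt_horizontalStep_iff, complConj, b.2, if_true]
    obtain ⟨d, hd⟩ := Nat.exists_eq_add_of_le (lam.conjP_parts_le (p - 1 - b))
    generalize conjP lam.parts (p - 1 - b) = c at hd
    subst hd
    simp [Fin.prod_univ_add]
  · simpa only [Function.comp_def, hleft] using lam.verticalStep.strictMono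
  · simpa only [Function.comp_def, hright] using lam.horizontalStep.strictMono

theorem bijective_mk_shuffle :
    Function.Bijective fun lam : BoxPartition n p =>
      (lam.shuffle : Equiv.Perm (Fin n ⊕ Fin p) ⧸
        (Equiv.Perm.sumCongrHom (Fin n) (Fin p)).range) := by
  constructor
  · intro lam mu h
    obtain ⟨⟨σ, τ⟩, hστ⟩ := QuotientGroup.eq.1 h
    have hcomp : lam.verticalStep ∘ σ = mu.verticalStep ∘ (1 : Equiv.Perm (Fin n)) := by
      ext1 k
      have hk := DFunLike.congr_fun (eq_inv_mul_iff_mul_eq.1 hστ) (Sum.inl k)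
      simpa [finSumFinEquiv_shuffle_inl] using congrArg finSumFinEquiv hk
    exact bijective_verticalStep.injective
      (congrArg Prod.fst (injective_orderEmbedding_comp_perm (a₁ := (_, σ)) (a₂ := (_, 1)) hcomp))
  · intro π
    induction π using QuotientGroup.induction_on with | H π =>
    obtain ⟨g, σ, hg⟩ := exists_orderEmbedding_comp_perm_eq
      (finSumFinEquiv.injective.comp (π.injective.comp Sum.inl_injective))
    obtain ⟨lam, rfl⟩ := bijective_verticalStep.surjective g
    refine ⟨lam, QuotientGroup.eq.2 ?_⟩
    apply Equiv.Perm.mem_sumCongrHom_range_of_perm_mapsTo_inl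
    rintro _ ⟨k, rfl⟩
    refine ⟨σ k, ?_⟩
    rw [Equiv.Perm.mul_apply, Equiv.Perm.eq_inv_iff_eq, ← finSumFinEquiv.apply_eq_iff_eq,
      finSumFinEquiv_shuffle_inl]
    exact congrFun hg k

theorem sum_tuple_eq_sum {M : Type*} [AddCommMonoid M] (f : (Fin n → Fin (p + 1)) → M) :
    (∑ lam : Fin n → Fin (p + 1), if ∀ a b : Fin n, a ≤ b → lam b ≤ lam a then f lam else 0) =
      ∑ lam : BoxPartition n p, f lam.1 := by
  rw [← sum_filter]
  exact sum_subtype _ (by simp) f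

theorem sum_tuple_le_eq_sum {M : Type*} [AddCommMonoid M] (f : (ℕ → ℕ) → M)
    (hf : ∀ mu : BoxPartition n p, (∃ i : Fin n, lam.parts i < mu.parts i) → f mu.parts = 0) :
    (∑ mu : (k : Fin n) → Fin ((lam.1 k : ℕ) + 1),
      if ∀ a b : Fin n, a ≤ b → (mu b : ℕ) ≤ mu a then f (extF mu) else 0) =
      ∑ mu : BoxPartition n p, f mu.parts := by
  rw [← sum_filter]
  refine sum_bij_ne_zero
    (fun mu hmu _ => ⟨fun k => (mu k).castLE (Nat.succ_le_succ (lam.1 k).is_le),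
      fun a b hab => (mem_filter.1 hmu).2 a b hab⟩) (by simp) ?_ ?_ fun _ _ _ => rfl
  · intro mu _ _ nu _ _ h
    ext k
    exact congrArg (fun kappa : BoxPartition n p => (kappa.1 k : ℕ)) h
  · intro mu _ hmu
    have hle (k : Fin n) : (mu.1 k : ℕ) ≤ lam.1 k := by
      rw [← parts_apply, ← parts_apply]
      exact not_lt.1 fun hk => hmu (hf mu ⟨k, hk⟩)
    exact ⟨fun k => ⟨mu.1 k, Nat.lt_succ_of_le (hle k)⟩, by simpa using mu.2, hmu, rfl⟩

end BoxPartition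

section AlternantExpansions

variable {n p : ℕ} {R : Type*} [CommRing R]

theorem alternant_append_zero_eq_sum (x : Fin n → R) (y : Fin p → R) :
    alternant (Fin.append x y) 0 = ∑ lam : BoxPartition n p,
      (-1) ^ (∑ b : Fin p, complConj n p lam.parts b) * alternant x lam.parts *
        alternant y (complConj n p lam.parts) := by
  set powers : Matrix (Fin n ⊕ Fin p) (Fin n ⊕ Fin p) R :=
    .of fun i j => Sum.elim x y i ^ (n + p - 1 - (finSumFinEquiv j : ℕ))
  have hpowers : alternant (Fin.append x y) 0 = powers.det := by
    rw [alternant, ← Matrix.det_submatrix_equiv_self finSumFinEquiv]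
    congr 1
    ext (a | a) j <;> simp [powers]
  have hvertical (lam : BoxPartition n p) :
      (powers.submatrix Sum.inl (lam.shuffle ∘ Sum.inl)).det = alternant x lam.parts := by
    rw [alternant]
    congr 1
    ext a k
    simp [powers, lam.finSumFinEquiv_shuffle_inl, lam.sub_verticalStep]
  have hhorizontal (lam : BoxPartition n p) :
      (powers.submatrix Sum.inr (lam.shuffle ∘ Sum.inr)).det =
        alternant y (complConj n p lam.parts) := by
    rw [alternant]
    congr 1
    ext a b
    simp [powers, lam.finSumFinEquiv_shuffle_inr, lam.sub_horizontalStep]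
  rw [hpowers, det_eq_sum_sign_mul_det_mul_det BoxPartition.bijective_mk_shuffle]
  refine sum_congr rfl fun lam _ => ?_
  rw [hvertical, hhorizontal, lam.sign_shuffle]
  push_cast
  rfl

theorem alternant_zero_mul_alternant_zero_mul_prod_add (x : Fin n → R) (y : Fin p → R) :
    alternant x 0 * alternant y 0 * ∏ a, ∏ b, (x a + y b) =
      ∑ lam : BoxPartition n p, alternant x lam.parts * alternant y (complConj n p lam.parts) := by
  have hsq (k : ℕ) : (-1 : R) ^ k * (-1) ^ k = 1 := by rw [← mul_pow]; simp
  set ε : R := (-1) ^ (∑ b : Fin p, (p - 1 - (b : ℕ))) with hε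
  have hunit : IsUnit ε := .of_mul_eq_one ε (hsq _)
  refine hunit.mul_left_cancel ?_
  calc ε * (alternant x 0 * alternant y 0 * ∏ a, ∏ b, (x a + y b))
      = alternant (Fin.append x (-y)) 0 := by
        simp only [alternant_append_zero, alternant_neg, Pi.zero_apply, sum_const_zero, pow_zero,
          one_mul, ← hε, Pi.neg_apply, sub_neg_eq_add]
        ring
    _ = ∑ lam : BoxPartition n p,
          ε * (alternant x lam.parts * alternant y (complConj n p lam.parts)) := by
        rw [alternant_append_zero_eq_sum]
        refine sum_congr rfl fun lam _ => ?_
        rw [alternant_neg, ← hε]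
        linear_combination (ε * alternant x lam.parts * alternant y (complConj n p lam.parts)) *
          hsq (∑ b : Fin p, complConj n p lam.parts b)
    _ = ε * ∑ lam : BoxPartition n p,
          alternant x lam.parts * alternant y (complConj n p lam.parts) := (mul_sum _ _ _).symm

theorem one_add_pow_eq_sum_fin (x : R) {k N : ℕ} (hk : k < N) :
    (1 + x) ^ k = ∑ j : Fin N, x ^ (N - 1 - (j : ℕ)) * (k.choose (N - 1 - (j : ℕ)) : R) := by
  rw [Fin.sum_univ_eq_sum_range (fun j => x ^ (N - 1 - j) * (k.choose (N - 1 - j) : R)) N,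
    sum_range_reflect (fun j => x ^ j * (k.choose j : R)) N, add_comm, add_pow]
  simp only [one_pow, mul_one]
  refine sum_subset (range_subset_range.2 hk) fun j _ hj => ?_
  rw [Nat.choose_eq_zero_of_lt (by simpa [Nat.lt_succ_iff] using hj), Nat.cast_zero, mul_zero]

theorem alternant_one_add (x : Fin n → R) (lam : BoxPartition n p) :
    alternant (fun a => 1 + x a) lam.parts =
      ∑ mu : BoxPartition n p, (Edet n lam.parts mu.parts : R) * alternant x mu.parts := by
  set powers : Matrix (Fin n) (Fin (n + p)) R := .of fun a j => x a ^ (n + p - 1 - (j : ℕ))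
  set binomials : Matrix (Fin (n + p)) (Fin n) R := .of fun j b =>
    ((lam.parts b + (n - 1 - (b : ℕ))).choose (n + p - 1 - (j : ℕ)) : R)
  have hfactor : alternant (fun a => 1 + x a) lam.parts = (powers * binomials).det := by
    rw [alternant]
    congr 1
    ext a b
    have := lam.parts_le b
    exact one_add_pow_eq_sum_fin (x a) (by omega)
  have hpowers (mu : BoxPartition n p) :
      (powers.submatrix id mu.verticalStep).det = alternant x mu.parts := by
    rw [alternant]
    congr 1
    ext a k
    simp [powers, mu.sub_verticalStep]
  have hbinomials (mu : BoxPartition n p) :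
      (binomials.submatrix mu.verticalStep id).det = (Edet n lam.parts mu.parts : R) := by
    rw [← Matrix.det_transpose, Edet, Int.cast_det]
    congr 1
    ext b k
    simp [binomials, mu.sub_verticalStep]
  rw [hfactor, det_mul_eq_sum_orderEmbedding, ← BoxPartition.bijective_verticalStep.sum_comp]
  exact sum_congr rfl fun mu _ => by rw [hpowers, hbinomials, mul_comm]

theorem alternant_zero_mul_alternant_zero_mul_prod_one_add_add (x : Fin n → R) (y : Fin p → R) :
    alternant x 0 * alternant y 0 * ∏ a, ∏ b, (1 + x a + y b) =
      ∑ lam : BoxPartition n p, ∑ mu : BoxPartition n p, (Edet n lam.parts mu.parts : R) *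
        alternant x mu.parts * alternant y (complConj n p lam.parts) := by
  rw [← alternant_one_add_zero, alternant_zero_mul_alternant_zero_mul_prod_add]
  exact sum_congr rfl fun lam _ => by rw [alternant_one_add, sum_mul]

end AlternantExpansions

section PolynomialAlternants

variable {σ R : Type*} [CommRing R]

/-- The shear `X i ↦ X i + X j` is injective and maps `X i - X j` to `X i`. -/
theorem isLeftRegular_X_sub_X {i j : σ} (hij : i ≠ j) :
    IsLeftRegular (X i - X j : MvPolynomial σ R) := by
  classical
  set φ : MvPolynomial σ R →ₐ[R] MvPolynomial σ R := aeval (Function.update X i (X i + X j))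
  set ψ : MvPolynomial σ R →ₐ[R] MvPolynomial σ R := aeval (Function.update X i (X i - X j))
  have hφ : φ (X i - X j) = X i := by simp [φ, hij.symm]
  have hψφ : ψ.comp φ = AlgHom.id R _ := by
    ext k
    rcases eq_or_ne k i with rfl | hk
    · simp [φ, ψ, hij.symm]
    · simp [φ, ψ, hk]
  intro f g (h : (X i - X j) * f = (X i - X j) * g)
  have hφfg : φ f = φ g := isRegular_X.left <| by
    simpa only [map_mul, hφ] using congrArg φ h
  simpa only [← AlgHom.comp_apply, hψφ, AlgHom.id_apply] using congrArg ψ hφfg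

theorem isLeftRegular_alternant_X_zero {n : ℕ} {v : Fin n → σ} (hv : Function.Injective v) :
    IsLeftRegular (alternant (fun a => (X (v a) : MvPolynomial σ R)) 0) := by
  rw [alternant_zero_eq_prod_Ioi]
  exact .prod fun i _ => .prod fun j hj => isLeftRegular_X_sub_X (hv.ne (mem_Ioi.1 hj).ne)

theorem rename_alternant_X {m : ℕ} (v : Fin m → σ) (lam : ℕ → ℕ) :
    rename v (alternant X lam) = alternant (fun a => (X (v a) : MvPolynomial σ R)) lam := by
  rw [← AlgHom.coe_toRingHom, map_alternant]
  simp [Function.comp_def]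

theorem rename_mul_alternant_X_zero {m : ℕ} (v : Fin m → σ) {f : MvPolynomial (Fin m) R}
    {lam : ℕ → ℕ} (h : f * alternant X 0 = alternant X lam) :
    rename v f * alternant (fun a => X (v a)) 0 = alternant (fun a => X (v a)) lam := by
  rw [← rename_alternant_X, ← map_mul, h, rename_alternant_X]

end PolynomialAlternants

theorem lascoux_part1_general {n p : ℕ} {R : Type*} [CommRing R]
    (Sx : (ℕ → ℕ) → MvPolynomial (Fin n) R)
    (Sy : (ℕ → ℕ) → MvPolynomial (Fin p) R)
    (hSx : ∀ lam : ℕ → ℕ, Antitone lam → (∀ k, n ≤ k → lam k = 0) →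
      Sx lam * ∏ q ∈ Finset.univ.filter (fun q : Fin n × Fin n => q.1 < q.2),
          (X q.1 - X q.2)
        = (Matrix.of fun a b : Fin n =>
            (X a : MvPolynomial (Fin n) R) ^ (lam (b : ℕ) + (n - 1 - (b : ℕ)))).det)
    (hSy : ∀ lam : ℕ → ℕ, Antitone lam → (∀ k, p ≤ k → lam k = 0) →
      Sy lam * ∏ q ∈ Finset.univ.filter (fun q : Fin p × Fin p => q.1 < q.2),
          (X q.1 - X q.2)
        = (Matrix.of fun a b : Fin p =>
            (X a : MvPolynomial (Fin p) R) ^ (lam (b : ℕ) + (p - 1 - (b : ℕ)))).det) :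
    (∏ a : Fin n, ∏ b : Fin p,
        (1 + X (Sum.inl a) + X (Sum.inr b) : MvPolynomial (Fin n ⊕ Fin p) R))
      = ∑ lam : Fin n → Fin (p + 1),
          if (∀ a b : Fin n, a ≤ b → lam b ≤ lam a) then
            ∑ mu : (k : Fin n) → Fin ((lam k : ℕ) + 1),
              if (∀ a b : Fin n, a ≤ b → ((mu b : ℕ) ≤ (mu a : ℕ))) then
                C (Edet n (extF (fun k => lam k)) (extF mu) : R)
                  * rename Sum.inl (Sx (extF mu))
                  * rename Sum.inr (Sy (complConj n p (extF (fun k => lam k))))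
              else 0
          else 0 := by
  set x : Fin n → MvPolynomial (Fin n ⊕ Fin p) R := fun a => X (Sum.inl a)
  set y : Fin p → MvPolynomial (Fin n ⊕ Fin p) R := fun b => X (Sum.inr b)
  simp only [← alternant_zero_eq_prod_filter] at hSx hSy
  have hx (mu : BoxPartition n p) :
      rename Sum.inl (Sx mu.parts) * alternant x 0 = alternant x mu.parts :=
    rename_mul_alternant_X_zero _ (hSx _ mu.antitone_parts mu.parts_of_le)
  have hy (lam : BoxPartition n p) :
      rename Sum.inr (Sy (complConj n p lam.parts)) * alternant y 0 =
        alternant y (complConj n p lam.parts) :=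
    rename_mul_alternant_X_zero _ (hSy _
      (antitone_complConj p lam.antitone_parts lam.parts_of_le) fun _ => complConj_of_le)
  have hreg : IsLeftRegular (alternant x 0 * alternant y 0) :=
    (isLeftRegular_alternant_X_zero Sum.inl_injective).mul
      (isLeftRegular_alternant_X_zero Sum.inr_injective)
  apply hreg
  beta_reduce
  rw [alternant_zero_mul_alternant_zero_mul_prod_one_add_add, BoxPartition.sum_tuple_eq_sum,
    mul_sum]
  refine sum_congr rfl fun lam _ => ?_
  have hinner := lam.sum_tuple_le_eq_sum
    (fun mu => C (Edet n lam.parts mu : R) * rename Sum.inl (Sx mu) *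
      rename Sum.inr (Sy (complConj n p lam.parts))) <| by
    rintro mu ⟨i, hi⟩
    simp [Edet_eq_zero_of_lt lam.antitone_parts mu.antitone_parts hi]
  refine Eq.trans ?_ (congrArg _ hinner.symm)
  rw [mul_sum]
  refine sum_congr rfl fun mu _ => ?_
  rw [← hx, ← hy, map_intCast]
  ring

theorem lascoux_part1 (n p : ℕ) (hn : 1 ≤ n) (hp : 1 ≤ p)
    (Sx : (ℕ → ℕ) → MvPolynomial (Fin n) ℤ)
    (Sy : (ℕ → ℕ) → MvPolynomial (Fin p) ℤ)
    -- bialternant characterization of the Schur polynomials in the x-variables: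
    (hSx : ∀ lam : ℕ → ℕ, Antitone lam → (∀ k, n ≤ k → lam k = 0) →
      Sx lam * ∏ q ∈ Finset.univ.filter (fun q : Fin n × Fin n => q.1 < q.2),
          (X q.1 - X q.2)
        = (Matrix.of fun a b : Fin n =>
            (X a : MvPolynomial (Fin n) ℤ) ^ (lam (b : ℕ) + (n - 1 - (b : ℕ)))).det)
    -- bialternant characterization of the Schur polynomials in the y-variables:
    (hSy : ∀ lam : ℕ → ℕ, Antitone lam → (∀ k, p ≤ k → lam k = 0) →
      Sy lam * ∏ q ∈ Finset.univ.filter (fun q : Fin p × Fin p => q.1 < q.2),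
          (X q.1 - X q.2)
        = (Matrix.of fun a b : Fin p =>
            (X a : MvPolynomial (Fin p) ℤ) ^ (lam (b : ℕ) + (p - 1 - (b : ℕ)))).det) :
    (∏ a : Fin n, ∏ b : Fin p,
        (1 + X (Sum.inl a) + X (Sum.inr b) : MvPolynomial (Fin n ⊕ Fin p) ℤ))
      = ∑ lam : Fin n → Fin (p + 1),
          if (∀ a b : Fin n, a ≤ b → lam b ≤ lam a) then
            ∑ mu : (k : Fin n) → Fin ((lam k : ℕ) + 1),
              if (∀ a b : Fin n, a ≤ b → ((mu b : ℕ) ≤ (mu a : ℕ))) then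
                C (Edet n (extF (fun k => lam k)) (extF mu))
                  * rename Sum.inl (Sx (extF mu))
                  * rename Sum.inr (Sy (complConj n p (extF (fun k => lam k))))
              else 0
          else 0 := by
  simpa only [Int.cast_id] using lascoux_part1_general Sx Sy hSx hSy
end

section
/- (Kernel of the supersymmetrization map.) Let n, p ≥ 1. Let ρ : ℤ[c_1, c_2, c_3, …] → ℤ[x_1,…,x_n,y_1,…,y_p] be the ring homomorphism from the polynomial ring in countably many variables c_1, c_2, … determined by ρ(c_d) = ∑_{a=0}^{d} (−1)^a h_a(x_1,…,x_n) e_{d−a}(y_1,…,y_p) for each d ≥ 1. For a partition λ, let S_λ := det[ c_{(λ~)_k − k + l} ]_{1≤k,l≤λ_1} ∈ ℤ[c_1, c_2, …] (with the convention c_0 = 1 and c_d = 0 for d < 0). Then the kernel of ρ equals the ℤ-submodule spanned by the set { S_λ : λ a partition with λ_l ≥ n+1 for all 1 ≤ l ≤ p+1 }. -/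
/-!
STATEMENT 5 (kernel of the supersymmetrization map):
the kernel of the ring homomorphism `ρ : ℤ[c_1,c_2,…] → ℤ[x_1,…,x_n,y_1,…,y_p]`,
`ρ(c_d) = ∑_{a=0}^d (−1)^a h_a(x) e_{d−a}(y)`, equals the ℤ-submodule spanned by the
abstract Schur polynomials `S_λ = det[ c_{(λ~)_k − k + l} ]_{1≤k,l≤λ_1}` for partitions
`λ` containing the block `((n+1)^{p+1})`.
The variable `X d` of `MvPolynomial ℕ ℤ` stands for `c_{d+1}`; partitions are encoded
0-based as functions `ℕ → ℕ`.
-/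

open Finset MvPolynomial

/-- The complete homogeneous symmetric polynomial `h_a(x_1,…,x_n)` in the x-variables. -/
noncomputable def hsymX (n p a : ℕ) : MvPolynomial (Fin n ⊕ Fin p) ℤ :=
  ∑ f ∈ Finset.Nat.antidiagonalTuple n a, ∏ k, X (Sum.inl k) ^ f k

/-- The elementary symmetric polynomial `e_b(y_1,…,y_p)` in the y-variables. -/
noncomputable def esymY (n p b : ℕ) : MvPolynomial (Fin n ⊕ Fin p) ℤ :=
  ∑ t ∈ Finset.powersetCard b (Finset.univ : Finset (Fin p)), ∏ i ∈ t, X (Sum.inr i)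

/-- `c_d = ∑_{a=0}^{d} (−1)^a h_a(x) e_{d−a}(y)`, the Chern class of `B^p − A^n`. -/
noncomputable def cpoly (n p d : ℕ) : MvPolynomial (Fin n ⊕ Fin p) ℤ :=
  ∑ a ∈ Finset.range (d + 1), (-1) ^ a * hsymX n p a * esymY n p (d - a)

/-- The variable `c_d ∈ ℤ[c_1,c_2,…]` for integer `d`, with the conventions
`c_0 = 1` and `c_d = 0` for `d < 0`.  (`X e` encodes `c_{e+1}`.) -/
noncomputable def cvar (d : ℤ) : MvPolynomial ℕ ℤ :=
  if d < 0 then 0 else if d = 0 then 1 else X (d.toNat - 1)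

/-- The abstract Schur polynomial
`S_λ = det[ c_{(λ~)_k − k + l} ]_{1≤k,l≤λ_1}` in `ℤ[c_1,c_2,…]` (indices 0-based). -/
noncomputable def SchurC (lam : ℕ → ℕ) : MvPolynomial ℕ ℤ :=
  (Matrix.of fun k l : Fin (lam 0) =>
    cvar ((conjP lam (k : ℕ) : ℤ) - (k : ℕ) + (l : ℕ))).det

/-!
Write `ρ` as specialization of the generic series `1 + c_1 t + c_2 t² + ⋯` to
`∏ (1 + y_j t) / ∏ (1 + x_i t)`. The abstract Schur polynomials of all partitions span
`ℤ[c_1,c_2,…]`: expanding the determinant of a sorted sequence `b`, every monomial off the diagonal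
has the same `∑ bᵢ` and, by the rearrangement inequality, a larger `∑ bᵢ²`. Partitions containing
the block are killed, because clearing the denominator by column operations exposes a zero block
that is too large for a nonzero determinant. The remaining partitions stay linearly independent,
which is seen by adding the variables one at a time: the leading coefficient of a Schur polynomial
in a new `y` (in a new `x`) is, up to sign, the one with the first column (the first row) removed,
so partitions of the hook with `p + 1` columns (`n + 1` rows) reduce to those of a smaller hook.
-/

open scoped Polynomial PowerSeries

section Partition

/-- A partition, encoded as the 0-based sequence of its parts padded with zeros. -/
structure IsPartition (mu : ℕ → ℕ) : Prop where
  antitone : Antitone mu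
  eventually_zero : ∃ N, ∀ k, N ≤ k → mu k = 0

variable {mu nu : ℕ → ℕ}

theorem IsPartition.lt_conjP_iff (h : IsPartition mu) {k m : ℕ} : k < conjP mu m ↔ m < mu k := by
  classical
  obtain ⟨N, hN⟩ := h.eventually_zero
  have hex : ∃ k, mu k ≤ m := ⟨N, by simp [hN N le_rfl]⟩
  have hfind (k : ℕ) : m + 1 ≤ mu k ↔ k < Nat.find hex := by
    rw [Nat.lt_find_iff]
    exact ⟨fun hk j hj => by have := h.antitone hj; omega, fun hk => by have := hk k le_rfl; omega⟩
  have hcard : conjP mu m = Nat.find hex := by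
    rw [conjP, Nat.card_congr (Equiv.subtypeEquivRight hfind),
      Nat.card_congr Fin.equivSubtype.symm, Nat.card_fin]
  rw [hcard, ← hfind, Nat.succ_le_iff]

theorem IsPartition.conjP_le_iff (h : IsPartition mu) {k m : ℕ} : conjP mu m ≤ k ↔ mu k ≤ m := by
  rw [← not_lt, h.lt_conjP_iff, not_lt]

theorem isPartition_conjP (h : IsPartition mu) : IsPartition (conjP mu) where
  antitone _ _ hab :=
    le_of_forall_lt fun _ hk => h.lt_conjP_iff.2 (hab.trans_lt (h.lt_conjP_iff.1 hk))
  eventually_zero := ⟨mu 0, fun _ hk => Nat.le_zero.1 (h.conjP_le_iff.2 hk)⟩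

theorem conjP_conjP (h : IsPartition mu) : conjP (conjP mu) = mu :=
  funext fun _ => eq_of_forall_lt_iff fun _ => by
    rw [(isPartition_conjP h).lt_conjP_iff, h.lt_conjP_iff]

theorem IsPartition.removeRow (h : IsPartition mu) : IsPartition fun k => mu (k + 1) where
  antitone _ _ hab := h.antitone (Nat.succ_le_succ hab)
  eventually_zero := h.eventually_zero.imp fun _ hN _ hk => hN _ (Nat.le_succ_of_le hk)

theorem IsPartition.removeColumn (h : IsPartition mu) : IsPartition fun k => mu k - 1 where
  antitone _ _ hab := Nat.sub_le_sub_right (h.antitone hab) 1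
  eventually_zero := h.eventually_zero.imp fun _ hN k hk => by rw [hN k hk]

theorem IsPartition.eq_of_removeColumn_eq (hmu : IsPartition mu) (hnu : IsPartition nu)
    (hlen : conjP mu 0 = conjP nu 0) (h : (fun k => mu k - 1) = fun k => nu k - 1) : mu = nu := by
  funext k
  have hk : mu k - 1 = nu k - 1 := congrFun h k
  have hpos : 0 < mu k ↔ 0 < nu k := by rw [← hmu.lt_conjP_iff, ← hnu.lt_conjP_iff, hlen]
  omega

theorem exists_isPartition_extension {m : ℕ} {b : Fin m → ℕ} (hb : Antitone b) :
    ∃ mu, IsPartition mu ∧ (∀ i : Fin m, mu i = b i) ∧ mu m = 0 := by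
  refine ⟨fun k => if hk : k < m then b ⟨k, hk⟩ else 0, ⟨fun i j hij => ?_, m, fun k hk => ?_⟩,
    fun i => by simp, by simp⟩
  · by_cases hj : j < m
    · simpa [hj, hij.trans_lt hj] using hb (Fin.mk_le_mk.2 hij)
    · simp [hj]
  · simp [hk.not_gt]

/-- The partitions `mu` inside the hook with `n` rows and `p` columns, i.e. `μ_{n+1} ≤ p`. -/
def hookPartitions (n p : ℕ) : Set (ℕ → ℕ) := {mu | IsPartition mu ∧ mu n ≤ p}

/-- The partitions containing the block with `n + 1` rows of length `p + 1`. These are the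
conjugates of the partitions `lam` of the theorem, whose block has `p + 1` rows. -/
def blockPartitions (n p : ℕ) : Set (ℕ → ℕ) := {mu | IsPartition mu ∧ p < mu n}

theorem hookPartitions_union_blockPartitions (n p : ℕ) :
    hookPartitions n p ∪ blockPartitions n p = {mu | IsPartition mu} := by
  ext mu
  simp only [hookPartitions, blockPartitions, Set.mem_union, Set.mem_ofPred_eq, ← and_or_left,
    le_or_gt, and_true]

theorem hookPartitions_zero_zero : hookPartitions 0 0 = {0} := by
  ext mu
  refine ⟨fun ⟨h, h0⟩ => funext fun k => Nat.le_zero.1 ((h.antitone k.zero_le).trans h0), ?_⟩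
  rintro rfl
  exact ⟨⟨antitone_const, 0, fun _ _ => rfl⟩, le_rfl⟩

end Partition

section IntCoeff

variable {R S : Type*} [CommRing R] [CommRing S]

/-- The coefficient of a power series at an integer, zero at negative integers. -/
noncomputable def intCoeff (d : ℤ) (F : R⟦X⟧) : R :=
  if d < 0 then 0 else PowerSeries.coeff d.toNat F

theorem intCoeff_of_neg {d : ℤ} (hd : d < 0) (F : R⟦X⟧) : intCoeff d F = 0 :=
  if_pos hd

@[simp]
theorem intCoeff_natCast (d : ℕ) (F : R⟦X⟧) : intCoeff (d : ℤ) F = PowerSeries.coeff d F := by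
  simp [intCoeff]

@[simp]
theorem intCoeff_zero (F : R⟦X⟧) : intCoeff 0 F = PowerSeries.constantCoeff F := by
  simp [intCoeff]

theorem intCoeff_map (f : R →+* S) (d : ℤ) (F : R⟦X⟧) :
    intCoeff d (PowerSeries.map f F) = f (intCoeff d F) := by
  unfold intCoeff
  split_ifs <;> simp

theorem intCoeff_add (d : ℤ) (F G : R⟦X⟧) :
    intCoeff d (F + G) = intCoeff d F + intCoeff d G := by
  unfold intCoeff
  split_ifs <;> simp

theorem intCoeff_mul_C_mul_X_pow (F : R⟦X⟧) (a : R) (j : ℕ) (d : ℤ) :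
    intCoeff d (F * (PowerSeries.C a * PowerSeries.X ^ j)) = a * intCoeff (d - j) F := by
  rw [mul_left_comm]
  rcases lt_or_ge d 0 with hd | hd
  · rw [intCoeff_of_neg hd, intCoeff_of_neg (by omega), mul_zero]
  lift d to ℕ using hd
  rw [intCoeff_natCast, PowerSeries.coeff_C_mul, PowerSeries.coeff_mul_X_pow']
  split_ifs with hj
  · rw [← Nat.cast_sub hj, intCoeff_natCast]
  · rw [intCoeff_of_neg (by omega)]

theorem intCoeff_mul_one_add_C_mul_X (F : R⟦X⟧) (y : R) (d : ℤ) :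
    intCoeff d (F * (1 + PowerSeries.C y * PowerSeries.X)) =
      intCoeff d F + y * intCoeff (d - 1) F := by
  simpa [mul_add, intCoeff_add] using intCoeff_mul_C_mul_X_pow F y 1 d

theorem intCoeff_mul_polynomial (F : R⟦X⟧) {P : R[X]} {N : ℕ} (hP : P.natDegree ≤ N) (d : ℤ) :
    intCoeff d (F * (P : R⟦X⟧)) = ∑ j ∈ range (N + 1), P.coeff j * intCoeff (d - j) F := by
  let D : R⟦X⟧ →+ R := AddMonoidHom.mk' (intCoeff d) (intCoeff_add d)
  change D (F * (P : R⟦X⟧)) = _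
  conv_lhs => rw [P.as_sum_range_C_mul_X_pow' (Nat.lt_succ_of_le hP)]
  rw [← Polynomial.coeToPowerSeries.ringHom_apply, map_sum, mul_sum, map_sum]
  refine sum_congr rfl fun j _ => ?_
  simpa [D] using intCoeff_mul_C_mul_X_pow F (P.coeff j) j d

end IntCoeff

section Determinants

variable {R : Type*} [CommRing R] {ι : Type*} [Fintype ι] [DecidableEq ι]

theorem det_eq_zero_of_zero_block (M : Matrix ι ι R) {s t : Finset ι}
    (hcard : Fintype.card ι < #s + #t) (hM : ∀ i ∈ s, ∀ j ∈ t, M i j = 0) : M.det = 0 := by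
  rw [Matrix.det_apply]
  refine sum_eq_zero fun σ _ => ?_
  have hmeet : (s ∩ t.image σ).Nonempty :=
    inter_nonempty_of_card_lt_card_add_card (subset_univ s) (subset_univ _)
      (by rwa [card_image_of_injective t σ.injective])
  obtain ⟨_, hi⟩ := hmeet
  obtain ⟨his, hit⟩ := mem_inter.1 hi
  obtain ⟨j, hj, rfl⟩ := mem_image.1 hit
  have hprod : ∏ k, M (σ k) k = 0 := prod_eq_zero (mem_univ j) (hM _ his j hj)
  rw [hprod, smul_zero]

theorem coeff_det_updateCol_map_C (B : Matrix ι ι R) (i : ι) (v : ι → R[X]) (d : ℕ) :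
    ((B.map Polynomial.C).updateCol i v).det.coeff d =
      (B.updateCol i fun k => (v k).coeff d).det := by
  rw [← Matrix.cramer_apply, ← Matrix.cramer_apply, Matrix.cramer_eq_adjugate_mulVec,
    Matrix.cramer_eq_adjugate_mulVec, ← RingHom.mapMatrix_apply, ← RingHom.map_adjugate]
  simp [Matrix.mulVec, dotProduct, Polynomial.finsetSum_coeff]

end Determinants

section JacobiTrudi

variable {R S : Type*} [CommRing R] [CommRing S]

/-- The `m × m` Jacobi–Trudi determinant `det[c_{μ_k - k + l}]` in the coefficients `c_d` of a
power series. -/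
noncomputable def jacobiTrudi (F : R⟦X⟧) (m : ℕ) (mu : ℕ → ℕ) : R :=
  (Matrix.of fun k l : Fin m => intCoeff ((mu k : ℤ) - (k : ℕ) + (l : ℕ)) F).det

/-- The Schur function attached to the coefficients of a power series: the Jacobi–Trudi determinant
with as many rows as `mu` has parts. It is indexed by the row sequence of the determinant, which is
the conjugate of the partition indexing `SchurC`. -/
noncomputable def schurDet (F : R⟦X⟧) (mu : ℕ → ℕ) : R :=
  jacobiTrudi F (conjP mu 0) mu

theorem map_jacobiTrudi (f : R →+* S) (F : R⟦X⟧) (m : ℕ) (mu : ℕ → ℕ) :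
    jacobiTrudi (PowerSeries.map f F) m mu = f (jacobiTrudi F m mu) := by
  rw [jacobiTrudi, jacobiTrudi, RingHom.map_det]
  congr 1
  ext k l
  simp [intCoeff_map]

theorem map_schurDet (f : R →+* S) (F : R⟦X⟧) (mu : ℕ → ℕ) :
    schurDet (PowerSeries.map f F) mu = f (schurDet F mu) :=
  map_jacobiTrudi f F _ mu

theorem jacobiTrudi_succ_of_eq_zero {F : R⟦X⟧} (hF : PowerSeries.constantCoeff F = 1) {m : ℕ}
    {mu : ℕ → ℕ} (hm : mu m = 0) : jacobiTrudi F (m + 1) mu = jacobiTrudi F m mu := by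
  rw [jacobiTrudi, Matrix.det_succ_row _ (Fin.last m), sum_eq_single (Fin.last m)]
  · simp [jacobiTrudi, Matrix.submatrix, hm, hF]
  · intro l _ hl
    have hlm : (l : ℕ) < m := Fin.val_lt_last hl
    rw [Matrix.of_apply, Fin.val_last, hm, intCoeff_of_neg (by omega)]
    simp
  · simp

theorem jacobiTrudi_eq_schurDet {F : R⟦X⟧} (hF : PowerSeries.constantCoeff F = 1) {mu : ℕ → ℕ}
    (hmu : IsPartition mu) {m : ℕ} (hm : mu m = 0) : jacobiTrudi F m mu = schurDet F mu := by
  have hlen : conjP mu 0 ≤ m := hmu.conjP_le_iff.2 hm.le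
  clear hm
  induction m, hlen using Nat.le_induction with
  | base => rfl
  | succ m hm ih =>
    rw [jacobiTrudi_succ_of_eq_zero hF (Nat.le_zero.1 (hmu.conjP_le_iff.1 hm)), ih]

theorem schurDet_zero {F : R⟦X⟧} (hF : PowerSeries.constantCoeff F = 1) : schurDet F 0 = 1 := by
  have hzero : IsPartition 0 := ⟨antitone_const, 0, fun _ _ => rfl⟩
  rw [← jacobiTrudi_eq_schurDet hF hzero (m := 0) rfl, jacobiTrudi, Matrix.det_isEmpty]

theorem IsPartition.apply_conjP_zero {mu : ℕ → ℕ} (h : IsPartition mu) : mu (conjP mu 0) = 0 :=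
  Nat.le_zero.1 (h.conjP_le_iff.1 le_rfl)

theorem jacobiTrudi_eq_zero_of_mul_eq {F : R⟦X⟧} {P Q : R[X]} (hFP : F * (P : R⟦X⟧) = Q)
    (hP0 : P.coeff 0 = 1) {n p : ℕ} (hP : P.natDegree ≤ n) (hQ : Q.natDegree ≤ p) {mu : ℕ → ℕ}
    (hmu : ∀ k ≤ n, p < mu k) {m : ℕ} (hm : n < m) : jacobiTrudi F m mu = 0 := by
  -- Column operations by the unitriangular matrix `T` turn the entries in the columns `l ≥ n` into
  -- coefficients of `Q`, and those in the rows `k ≤ n` have degree greater than `p`.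
  let T : Matrix (Fin m) (Fin m) R := Matrix.of fun k l => intCoeff ((l : ℤ) - (k : ℕ)) (P : R⟦X⟧)
  have hT : T.det = 1 := by
    have hupper : T.IsUpperTriangular := fun k l (hlk : l < k) =>
      intCoeff_of_neg (sub_neg.2 (by exact_mod_cast hlk)) _
    rw [Matrix.det_of_isUpperTriangular hupper]
    simp [T, hP0]
  have hentry (a : ℤ) (l : Fin m) (hl : n ≤ (l : ℕ)) :
      ∑ j : Fin m, intCoeff (a + (j : ℕ)) F * T j l = intCoeff (a + (l : ℕ)) (Q : R⟦X⟧) := by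
    simp only [T, Matrix.of_apply]
    rw [← hFP, intCoeff_mul_polynomial F (hP.trans hl), ← sum_range_reflect,
      Fin.sum_univ_eq_sum_range
        fun j => intCoeff (a + (j : ℤ)) F * intCoeff ((l : ℤ) - (j : ℕ)) (P : R⟦X⟧)]
    refine (sum_subset (range_mono l.is_lt) fun j _ hj => ?_).symm.trans (sum_congr rfl ?_)
    · rw [mem_range, not_lt] at hj
      rw [intCoeff_of_neg (d := (l : ℤ) - j) (by omega), mul_zero]
    · intro j hj
      have hjl : j ≤ l := Nat.lt_succ_iff.1 (mem_range.1 hj)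
      rw [Nat.add_sub_cancel, mul_comm, ← Nat.cast_sub hjl, intCoeff_natCast,
        Polynomial.coeff_coe, Nat.cast_sub hjl]
      congr 2
      ring
  rw [jacobiTrudi, ← mul_one (Matrix.det _), ← hT, ← Matrix.det_mul]
  refine det_eq_zero_of_zero_block _ (s := Iic ⟨n, hm⟩) (t := Ici ⟨n, hm⟩) ?_ fun k hk l hl => ?_
  · rw [Fintype.card_fin, Fin.card_Iic, Fin.card_Ici]
    dsimp only
    omega
  · rw [mem_Iic, Fin.le_def] at hk
    rw [mem_Ici, Fin.le_def] at hl
    dsimp only at hk hl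
    have hmuk := hmu k hk
    simp only [Matrix.mul_apply, Matrix.of_apply]
    rw [hentry _ l hl]
    lift (mu k : ℤ) - (k : ℕ) + (l : ℕ) to ℕ using (by omega) with d hd
    rw [intCoeff_natCast, Polynomial.coeff_coe]
    exact Polynomial.coeff_eq_zero_of_natDegree_lt (by omega)

end JacobiTrudi

section OneMoreVariable

variable {R : Type*} [CommRing R] {F : R⟦X⟧} {G : R[X]⟦X⟧}

theorem jacobiTrudi_eq_det_of_eq_mul_one_add_X
    (hG : G = PowerSeries.map Polynomial.C F * (1 + PowerSeries.C Polynomial.X * PowerSeries.X))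
    (m : ℕ) (mu : ℕ → ℕ) :
    jacobiTrudi G m mu =
      ((Polynomial.X : R[X]) •
          (Matrix.of fun k l : Fin m =>
            intCoeff ((mu k : ℤ) - (k : ℕ) + (l : ℕ) - 1) F).map Polynomial.C +
        (Matrix.of fun k l : Fin m =>
          intCoeff ((mu k : ℤ) - (k : ℕ) + (l : ℕ)) F).map Polynomial.C).det := by
  rw [jacobiTrudi]
  congr 1
  ext1 k l
  simp [hG, intCoeff_mul_one_add_C_mul_X, intCoeff_map, add_comm]

theorem natDegree_jacobiTrudi_le_of_eq_mul_one_add_X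
    (hG : G = PowerSeries.map Polynomial.C F * (1 + PowerSeries.C Polynomial.X * PowerSeries.X))
    (m : ℕ) (mu : ℕ → ℕ) :
    (jacobiTrudi G m mu).natDegree ≤ m := by
  rw [jacobiTrudi_eq_det_of_eq_mul_one_add_X hG]
  exact (Polynomial.natDegree_det_X_add_C_le _ _).trans_eq (Fintype.card_fin m)

theorem coeff_jacobiTrudi_of_eq_mul_one_add_X
    (hG : G = PowerSeries.map Polynomial.C F * (1 + PowerSeries.C Polynomial.X * PowerSeries.X))
    {m : ℕ} {mu : ℕ → ℕ} (hmu : ∀ k < m, 0 < mu k) :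
    (jacobiTrudi G m mu).coeff m = jacobiTrudi F m fun k => mu k - 1 := by
  rw [jacobiTrudi_eq_det_of_eq_mul_one_add_X hG]
  refine (congrArg _ (Fintype.card_fin m).symm).trans
    ((Polynomial.coeff_det_X_add_C_card _ _).trans ?_)
  rw [jacobiTrudi]
  congr 1
  ext k l
  have hk := hmu k k.is_lt
  simp only [Matrix.of_apply]
  congr 1
  omega

theorem intCoeff_eq_of_mul_one_sub_X
    (hG : G * (1 + PowerSeries.C (-Polynomial.X) * PowerSeries.X) = PowerSeries.map Polynomial.C F)
    (d : ℤ) :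
    intCoeff d G = Polynomial.C (intCoeff d F) + Polynomial.X * intCoeff (d - 1) G := by
  have h := intCoeff_mul_one_add_C_mul_X G (-Polynomial.X) d
  rw [hG, intCoeff_map] at h
  rw [h]
  ring

theorem coeff_intCoeff_of_mul_one_sub_X
    (hG : G * (1 + PowerSeries.C (-Polynomial.X) * PowerSeries.X) = PowerSeries.map Polynomial.C F)
    (d : ℤ) (j : ℕ) :
    (intCoeff d G).coeff j = intCoeff (d - j) F := by
  induction j generalizing d with
  | zero => rw [intCoeff_eq_of_mul_one_sub_X hG]; simp
  | succ j ih =>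
    rw [intCoeff_eq_of_mul_one_sub_X hG, Polynomial.coeff_add, Polynomial.coeff_C_succ,
      Polynomial.coeff_X_mul, zero_add, ih]
    congr 1
    push_cast
    ring

theorem coeff_jacobiTrudi_of_mul_one_sub_X
    (hG : G * (1 + PowerSeries.C (-Polynomial.X) * PowerSeries.X) = PowerSeries.map Polynomial.C F)
    (m : ℕ) (mu : ℕ → ℕ) (j : ℕ) :
    (jacobiTrudi G (m + 1) mu).coeff j =
      ((Matrix.of fun k l : Fin (m + 1) =>
          intCoeff ((mu k : ℤ) - (k : ℕ) + (l : ℕ)) F).updateCol 0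
        fun k => intCoeff ((mu k : ℤ) - (k : ℕ) - j) F).det := by
  simp_rw [← coeff_intCoeff_of_mul_one_sub_X hG]
  rw [← coeff_det_updateCol_map_C, jacobiTrudi]
  congr 1
  -- Subtracting `X` times each column from the next one leaves only the first column over `G`.
  refine Matrix.det_eq_of_forall_col_eq_smul_add_pred (fun _ => Polynomial.X) (fun k => ?_)
    fun k l => ?_
  · simp
  · rw [Matrix.updateCol_ne (Fin.succ_ne_zero l)]
    simp only [Matrix.of_apply, Matrix.map_apply, Fin.val_succ, Fin.val_castSucc]
    rw [intCoeff_eq_of_mul_one_sub_X hG]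
    congr 3
    push_cast
    ring

theorem natDegree_jacobiTrudi_le_of_mul_one_sub_X
    (hG : G * (1 + PowerSeries.C (-Polynomial.X) * PowerSeries.X) = PowerSeries.map Polynomial.C F)
    (m : ℕ) {mu : ℕ → ℕ} (hmu : Antitone mu) :
    (jacobiTrudi G (m + 1) mu).natDegree ≤ mu 0 := by
  refine Polynomial.natDegree_le_iff_coeff_eq_zero.2 fun j hj => ?_
  rw [coeff_jacobiTrudi_of_mul_one_sub_X hG]
  refine Matrix.det_eq_zero_of_column_eq_zero 0 fun k => ?_
  have hk := hmu (Nat.zero_le k)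
  rw [Matrix.updateCol_self, intCoeff_of_neg (by omega)]

theorem coeff_apply_zero_jacobiTrudi_of_mul_one_sub_X
    (hG : G * (1 + PowerSeries.C (-Polynomial.X) * PowerSeries.X) = PowerSeries.map Polynomial.C F)
    (hF : PowerSeries.constantCoeff F = 1) (m : ℕ) {mu : ℕ → ℕ} (hmu : Antitone mu) :
    (jacobiTrudi G (m + 1) mu).coeff (mu 0) = jacobiTrudi F m fun k => mu (k + 1) := by
  rw [coeff_jacobiTrudi_of_mul_one_sub_X hG, Matrix.det_succ_column_zero,
    sum_eq_single 0 _ (by simp)]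
  · simp only [Matrix.updateCol_self, jacobiTrudi, Fin.val_zero, pow_zero, Nat.cast_zero, sub_zero,
      sub_self, intCoeff_zero, hF, one_mul]
    congr 1
    ext k l
    simp only [Matrix.submatrix_apply, Matrix.of_apply, Matrix.updateCol_ne (Fin.succ_ne_zero l),
      Fin.zero_succAbove, Fin.val_succ]
    congr 1
    push_cast
    ring
  · intro k _ hk
    have hmuk := hmu (Nat.zero_le k)
    have hkpos : 0 < (k : ℕ) := Nat.pos_of_ne_zero (Fin.val_ne_zero_iff.2 hk)
    rw [Matrix.updateCol_self, intCoeff_of_neg (by omega)]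
    simp

end OneMoreVariable

section LinearAlgebra

variable {K ι : Type*} [Ring K]

theorem linearIndepOn_of_coeff {R : Type*} [Ring R] [Module K R] {v : ι → R[X]} {s : Set ι}
    (deg : ι → ℕ) (hdeg : ∀ i ∈ s, (v i).natDegree ≤ deg i)
    (hcoeff : ∀ d, LinearIndepOn K (fun i => (v i).coeff d) {i ∈ s | deg i = d}) :
    LinearIndepOn K v s := by
  classical
  refine linearIndepOn_iff.2 fun l hl hsum => ?_
  by_contra hl0
  obtain ⟨i, hi, hmax⟩ := exists_max_image l.support deg (Finsupp.support_nonempty_iff.2 hl0)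
  have htop : l.filter (deg · = deg i) = 0 := by
    refine linearIndepOn_iff.1 (hcoeff (deg i)) _ ?_ ?_
    · refine (Finsupp.mem_supported _ _).2 fun j hj => ?_
      rw [Finsupp.support_filter, mem_coe, mem_filter] at hj
      exact ⟨hl hj.1, hj.2⟩
    · have hzero := congrArg (Polynomial.coeff · (deg i)) hsum
      simp only [Finsupp.linearCombination_apply, Finsupp.sum, Polynomial.finsetSum_coeff,
        Polynomial.coeff_smul, Polynomial.coeff_zero] at hzero
      rw [← hzero, Finsupp.linearCombination_apply, Finsupp.sum, Finsupp.support_filter, sum_filter]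
      refine sum_congr rfl fun j hj => ?_
      split_ifs with hji
      · rw [Finsupp.filter_apply_pos (deg · = deg i) l hji]
      · have hlt := (hdeg j (hl hj)).trans_lt (lt_of_le_of_ne (hmax j hj) hji)
        rw [Polynomial.coeff_eq_zero_of_natDegree_lt hlt, smul_zero]
  have hli : l i = 0 := by rw [← Finsupp.filter_apply_pos (deg · = deg i) l rfl, htop]; rfl
  exact Finsupp.mem_support_iff.1 hi hli

theorem ker_eq_span_image {M N : Type*} [AddCommGroup M] [Module K M] [AddCommGroup N]
    [Module K N] {f : M →ₗ[K] N} {v : ι → M} {s t : Set ι}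
    (hspan : Submodule.span K (v '' (s ∪ t)) = ⊤) (ht : ∀ i ∈ t, f (v i) = 0)
    (hs : LinearIndepOn K (f ∘ v) s) : LinearMap.ker f = Submodule.span K (v '' t) := by
  have hle : Submodule.span K (v '' t) ≤ LinearMap.ker f :=
    Submodule.span_le.2 (Set.forall_mem_image.2 ht)
  have hdisjoint : Disjoint (LinearMap.ker f) (Submodule.span K (v '' s)) := by
    have h := Submodule.range_ker_disjoint (v := fun i : s => v i) hs
    rwa [← Set.image_eq_range, disjoint_comm] at h
  refine (eq_of_le_of_inf_le_of_sup_le (z := Submodule.span K (v '' s)) hle ?_ ?_).symm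
  · exact hdisjoint.le_bot.trans bot_le
  · rw [← Submodule.span_union, ← Set.image_union, Set.union_comm, hspan]
    exact le_top

end LinearAlgebra

section Independence

variable {K R : Type*} [Ring K] [CommRing R] [Module K R] {F : R⟦X⟧} {G : R[X]⟦X⟧} {n p : ℕ}

theorem linearIndepOn_schurDet_of_eq_mul_one_add_X
    (hG : G = PowerSeries.map Polynomial.C F * (1 + PowerSeries.C Polynomial.X * PowerSeries.X))
    (hF : PowerSeries.constantCoeff F = 1)
    (h : LinearIndepOn K (schurDet F) (hookPartitions n p)) :
    LinearIndepOn K (schurDet G) (hookPartitions n (p + 1)) := by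
  refine linearIndepOn_of_coeff (fun mu => conjP mu 0)
    (fun mu _ => natDegree_jacobiTrudi_le_of_eq_mul_one_add_X hG _ mu) fun d => ?_
  set s := {mu ∈ hookPartitions n (p + 1) | conjP mu 0 = d}
  have hlead : Set.EqOn (schurDet F ∘ fun mu k => mu k - 1)
      (fun mu => (schurDet G mu).coeff d) s := by
    rintro mu ⟨⟨hmu, -⟩, rfl⟩
    have hpos (k : ℕ) (hk : k < conjP mu 0) : 0 < mu k := hmu.lt_conjP_iff.1 hk
    have hend : mu (conjP mu 0) - 1 = 0 := by rw [hmu.apply_conjP_zero]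
    dsimp only [Function.comp_apply]
    rw [← jacobiTrudi_eq_schurDet hF hmu.removeColumn hend, schurDet,
      coeff_jacobiTrudi_of_eq_mul_one_add_X hG hpos]
  have hinj : Set.InjOn (fun (mu : ℕ → ℕ) k => mu k - 1) s := fun mu hmu nu hnu =>
    hmu.1.1.eq_of_removeColumn_eq hnu.1.1 (hmu.2.trans hnu.2.symm)
  have hmaps : (fun (mu : ℕ → ℕ) k => mu k - 1) '' s ⊆ hookPartitions n p :=
    Set.image_subset_iff.2 fun mu hmu => ⟨hmu.1.1.removeColumn, Nat.sub_le_of_le_add hmu.1.2⟩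
  exact ((h.mono hmaps).comp_of_image hinj).congr hlead

theorem linearIndepOn_schurDet_of_mul_one_sub_X
    (hG : G * (1 + PowerSeries.C (-Polynomial.X) * PowerSeries.X) = PowerSeries.map Polynomial.C F)
    (hF : PowerSeries.constantCoeff F = 1) (hG0 : PowerSeries.constantCoeff G = 1)
    (h : LinearIndepOn K (schurDet F) (hookPartitions n p)) :
    LinearIndepOn K (schurDet G) (hookPartitions (n + 1) p) := by
  have hlong {mu : ℕ → ℕ} (hmu : IsPartition mu) :
      jacobiTrudi G (conjP mu 0 + 1) mu = schurDet G mu :=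
    jacobiTrudi_succ_of_eq_zero hG0 hmu.apply_conjP_zero
  refine linearIndepOn_of_coeff (fun mu => mu 0) (fun mu hmu => ?_) fun d => ?_
  · rw [← hlong hmu.1]
    exact natDegree_jacobiTrudi_le_of_mul_one_sub_X hG _ hmu.1.antitone
  set s := {mu ∈ hookPartitions (n + 1) p | mu 0 = d}
  have hlead : Set.EqOn (schurDet F ∘ fun mu k => mu (k + 1))
      (fun mu => (schurDet G mu).coeff d) s := by
    rintro mu ⟨⟨hmu, -⟩, rfl⟩
    have hend : mu (conjP mu 0 + 1) = 0 :=
      Nat.le_zero.1 ((hmu.antitone (Nat.le_succ _)).trans_eq hmu.apply_conjP_zero)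
    dsimp only [Function.comp_apply]
    rw [← jacobiTrudi_eq_schurDet hF hmu.removeRow hend, ← hlong hmu,
      coeff_apply_zero_jacobiTrudi_of_mul_one_sub_X hG hF _ hmu.antitone]
  have hinj : Set.InjOn (fun (mu : ℕ → ℕ) k => mu (k + 1)) s := fun mu hmu nu hnu hshift =>
    funext fun
      | 0 => hmu.2.trans hnu.2.symm
      | k + 1 => congrFun hshift k
  have hmaps : (fun (mu : ℕ → ℕ) k => mu (k + 1)) '' s ⊆ hookPartitions n p :=
    Set.image_subset_iff.2 fun mu hmu => ⟨hmu.1.1.removeRow, hmu.1.2⟩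
  exact ((h.mono hmaps).comp_of_image hinj).congr hlead

end Independence

section ChernPolynomials

variable {R S : Type*} [CommRing R] [CommRing S] {σ : Type*} [Fintype σ]

/-- The total Chern class `∏ᵢ (1 + xᵢ t)` of a bundle with Chern roots `xᵢ`. -/
noncomputable def chernPoly (x : σ → R) : R[X] := ∏ i, (1 + Polynomial.C (x i) * Polynomial.X)

theorem coe_chernPoly (x : σ → R) :
    (chernPoly x : R⟦X⟧) = ∏ i, (1 + PowerSeries.C (x i) * PowerSeries.X) := by
  rw [chernPoly, ← Polynomial.coeToPowerSeries.ringHom_apply, map_prod]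
  simp

theorem map_coe_chernPoly (f : R →+* S) (x : σ → R) :
    PowerSeries.map f (chernPoly x : R⟦X⟧) = (chernPoly (f ∘ x) : S⟦X⟧) := by
  simp [coe_chernPoly, map_prod]

theorem coe_chernPoly_cons {n : ℕ} (a : R) (x : Fin n → R) :
    (chernPoly (Fin.cons a x : Fin (n + 1) → R) : R⟦X⟧) =
      (1 + PowerSeries.C a * PowerSeries.X) * (chernPoly x : R⟦X⟧) := by
  simp [coe_chernPoly, Fin.prod_univ_succ]

theorem coeff_zero_chernPoly (x : σ → R) : (chernPoly x).coeff 0 = 1 := by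
  simp [chernPoly, Polynomial.coeff_zero_prod]

theorem natDegree_chernPoly_le (x : σ → R) : (chernPoly x).natDegree ≤ Fintype.card σ := by
  refine (Polynomial.natDegree_prod_le _ _).trans ?_
  refine (sum_le_card_nsmul univ _ 1 fun i _ => ?_).trans_eq (by simp)
  compute_degree

theorem coeff_chernPoly (x : σ → R) (b : ℕ) :
    (chernPoly x).coeff b = ∑ t ∈ powersetCard b univ, ∏ i ∈ t, x i := by
  classical
  rw [chernPoly, prod_one_add, Polynomial.finsetSum_coeff, powersetCard_eq_filter, sum_filter]
  refine sum_congr rfl fun t _ => ?_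
  rw [prod_mul_distrib, prod_const, ← map_prod, Polynomial.coeff_C_mul_X_pow]
  simp only [eq_comm]

theorem isUnit_coe_chernPoly (x : σ → R) : IsUnit (chernPoly x : R⟦X⟧) := by
  rw [PowerSeries.isUnit_iff_constantCoeff, Polynomial.constantCoeff_coe,
    coeff_zero_chernPoly]
  exact isUnit_one

theorem mk_neg_pow_mul_one_add (x : R) :
    PowerSeries.mk (fun a => (-x) ^ a) * (1 + PowerSeries.C x * PowerSeries.X) = 1 := by
  simpa [PowerSeries.rescale_mk, PowerSeries.rescale_X] using
    congrArg (PowerSeries.rescale (-x)) (PowerSeries.mk_one_mul_one_sub_eq_one R)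

theorem prod_mk_neg_pow {n : ℕ} (x : Fin n → R) :
    ∏ i, PowerSeries.mk (fun a => (-x i) ^ a) =
      PowerSeries.mk fun a => (-1) ^ a * ∑ f ∈ Nat.antidiagonalTuple n a, ∏ k, x k ^ f k := by
  ext d
  rw [PowerSeries.coeff_mk, PowerSeries.coeff_prod, mul_sum]
  refine sum_bij' (fun l _ => ⇑l) (fun f _ => Finsupp.equivFunOnFinite.symm f)
    (fun l hl => Nat.mem_antidiagonalTuple.2 (mem_finsuppAntidiag.1 hl).1)
    (fun f hf => mem_finsuppAntidiag.2 ⟨Nat.mem_antidiagonalTuple.1 hf, subset_univ _⟩)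
    (fun l _ => Finsupp.equivFunOnFinite.symm_apply_apply l) (fun _ _ => rfl) fun l hl => ?_
  simp only [PowerSeries.coeff_mk]
  rw [← (mem_finsuppAntidiag.1 hl).1, ← prod_pow_eq_pow_sum, ← prod_mul_distrib]
  exact prod_congr rfl fun i _ => neg_pow (x i) (l i)

theorem mk_hsymm_mul_chernPoly {n : ℕ} (x : Fin n → R) :
    PowerSeries.mk (fun a => (-1) ^ a * ∑ f ∈ Nat.antidiagonalTuple n a, ∏ k, x k ^ f k) *
      (chernPoly x : R⟦X⟧) = 1 := by
  rw [← prod_mk_neg_pow, coe_chernPoly, ← prod_mul_distrib]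
  exact prod_eq_one fun i _ => mk_neg_pow_mul_one_add (x i)

end ChernPolynomials

section SuperSeries

/-- The generating series of the classes `c_d(B^p − A^n)`, an element of
`ℤ[x_1,…,x_n,y_1,…,y_p]⟦t⟧`. -/
noncomputable def superSeries (n p : ℕ) : (MvPolynomial (Fin n ⊕ Fin p) ℤ)⟦X⟧ :=
  PowerSeries.mk (cpoly n p)

theorem superSeries_mul_chernPoly (n p : ℕ) :
    superSeries n p * (chernPoly (X ∘ Sum.inl : Fin n → MvPolynomial (Fin n ⊕ Fin p) ℤ)) =
      chernPoly (X ∘ Sum.inr : Fin p → MvPolynomial (Fin n ⊕ Fin p) ℤ) := by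
  have hfactor : superSeries n p = PowerSeries.mk (fun a => (-1) ^ a * hsymX n p a) *
      (chernPoly (X ∘ Sum.inr : Fin p → MvPolynomial (Fin n ⊕ Fin p) ℤ)) := by
    ext1 d
    rw [superSeries, PowerSeries.coeff_mk, cpoly, PowerSeries.coeff_mul,
      Nat.sum_antidiagonal_eq_sum_range_succ_mk]
    simp only [PowerSeries.coeff_mk, Polynomial.coeff_coe, coeff_chernPoly, esymY,
      Function.comp_apply]
  have hinv := mk_hsymm_mul_chernPoly (X ∘ Sum.inl : Fin n → MvPolynomial (Fin n ⊕ Fin p) ℤ)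
  rw [hfactor, mul_right_comm]
  exact (congrArg (· * _) hinv).trans (one_mul _)

theorem constantCoeff_superSeries (n p : ℕ) : PowerSeries.constantCoeff (superSeries n p) = 1 := by
  simpa [coeff_zero_chernPoly] using
    congrArg PowerSeries.constantCoeff (superSeries_mul_chernPoly n p)

theorem map_superSeries_mul_chernPoly {R : Type*} [CommRing R] {n p : ℕ} (x : Fin n → R)
    (y : Fin p → R) :
    PowerSeries.map (eval₂Hom (Int.castRingHom R) (Sum.elim x y)) (superSeries n p) *
      (chernPoly x : R⟦X⟧) = chernPoly y := by
  let φ := eval₂Hom (Int.castRingHom R) (Sum.elim x y)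
  have hx : φ ∘ X ∘ Sum.inl = x := funext fun i => by simp [φ]
  have hy : φ ∘ X ∘ Sum.inr = y := funext fun j => by simp [φ]
  have h := congrArg (PowerSeries.map φ) (superSeries_mul_chernPoly n p)
  rwa [map_mul, map_coe_chernPoly, map_coe_chernPoly, hx, hy] at h

theorem exists_map_superSeries_succ_right (n p : ℕ) :
    ∃ φ : MvPolynomial (Fin n ⊕ Fin (p + 1)) ℤ →+* (MvPolynomial (Fin n ⊕ Fin p) ℤ)[X],
      PowerSeries.map φ (superSeries n (p + 1)) =
        PowerSeries.map Polynomial.C (superSeries n p) *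
          (1 + PowerSeries.C Polynomial.X * PowerSeries.X) := by
  refine ⟨eval₂Hom (Int.castRingHom _) (Sum.elim (Polynomial.C ∘ X ∘ Sum.inl)
    (Fin.cons Polynomial.X (Polynomial.C ∘ X ∘ Sum.inr))), ?_⟩
  refine (isUnit_coe_chernPoly
    (Polynomial.C ∘ (X : _ → MvPolynomial (Fin n ⊕ Fin p) ℤ) ∘ Sum.inl)).mul_right_cancel ?_
  rw [map_superSeries_mul_chernPoly, coe_chernPoly_cons, ← map_coe_chernPoly, ← map_coe_chernPoly,
    ← superSeries_mul_chernPoly, map_mul]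
  ring

theorem exists_map_superSeries_succ_left (n p : ℕ) :
    ∃ φ : MvPolynomial (Fin (n + 1) ⊕ Fin p) ℤ →+* (MvPolynomial (Fin n ⊕ Fin p) ℤ)[X],
      PowerSeries.map φ (superSeries (n + 1) p) *
          (1 + PowerSeries.C (-Polynomial.X) * PowerSeries.X) =
        PowerSeries.map Polynomial.C (superSeries n p) := by
  refine ⟨eval₂Hom (Int.castRingHom _)
    (Sum.elim (Fin.cons (-Polynomial.X) (Polynomial.C ∘ X ∘ Sum.inl)) (Polynomial.C ∘ X ∘ Sum.inr)),
    ?_⟩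
  refine (isUnit_coe_chernPoly
    (Polynomial.C ∘ (X : _ → MvPolynomial (Fin n ⊕ Fin p) ℤ) ∘ Sum.inl)).mul_right_cancel ?_
  rw [mul_assoc, ← coe_chernPoly_cons, map_superSeries_mul_chernPoly, ← map_coe_chernPoly,
    ← map_coe_chernPoly, ← superSeries_mul_chernPoly, map_mul]

theorem linearIndepOn_schurDet_of_map {R S : Type*} [CommRing R] [CommRing S] {F : R⟦X⟧}
    {s : Set (ℕ → ℕ)} (f : R →+* S) (h : LinearIndepOn ℤ (schurDet (PowerSeries.map f F)) s) :
    LinearIndepOn ℤ (schurDet F) s :=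
  .of_comp f.toIntAlgHom.toLinearMap (h.congr fun mu _ => map_schurDet f F mu)

theorem linearIndepOn_schurDet_superSeries (n p : ℕ) :
    LinearIndepOn ℤ (schurDet (superSeries n p)) (hookPartitions n p) := by
  induction n with
  | zero =>
    induction p with
    | zero =>
      rw [hookPartitions_zero_zero]
      refine LinearIndepOn.singleton ?_
      rw [schurDet_zero (constantCoeff_superSeries 0 0)]
      exact one_ne_zero
    | succ p ih =>
      obtain ⟨φ, hφ⟩ := exists_map_superSeries_succ_right 0 p
      exact linearIndepOn_schurDet_of_map φ
        (linearIndepOn_schurDet_of_eq_mul_one_add_X hφ (constantCoeff_superSeries 0 p) ih)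
  | succ n ih =>
    obtain ⟨φ, hφ⟩ := exists_map_superSeries_succ_left n p
    refine linearIndepOn_schurDet_of_map φ
      (linearIndepOn_schurDet_of_mul_one_sub_X hφ (constantCoeff_superSeries n p) ?_ ih)
    rw [← intCoeff_zero, intCoeff_map, intCoeff_zero, constantCoeff_superSeries, map_one]

end SuperSeries

section Spanning

theorem sum_sq_lt_sum_sq_of_ne_one {m : ℕ} {b : Fin m → ℤ} (hb : Antitone b)
    {σ : Equiv.Perm (Fin m)} (hσ : σ ≠ 1) :
    ∑ i, b i ^ 2 < ∑ i, (b (σ i) - (σ i : ℕ) + (i : ℕ)) ^ 2 := by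
  let x : Fin m → ℤ := fun i => (i : ℕ)
  have hexpand : ∑ i, (b (σ i) - x (σ i) + x i) ^ 2 =
      ∑ i, b (σ i) ^ 2 + 2 * (∑ i, b (σ i) * x i - ∑ i, b (σ i) * x (σ i)) +
        ∑ i, (x i - x (σ i)) ^ 2 := by
    simp only [← sum_sub_distrib, mul_sum, ← sum_add_distrib]
    exact sum_congr rfl fun i _ => by ring
  have hx : StrictMono x := fun i j hij => Int.ofNat_lt.2 hij
  have hrearrange : ∑ i, b i * x i ≤ ∑ i, b (σ i) * x i :=
    (hb.antivary hx.monotone).sum_mul_le_sum_comp_perm_mul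
  have hpos : 0 < ∑ i, (x i - x (σ i)) ^ 2 := by
    obtain ⟨i, hi⟩ := not_forall.1 (mt Equiv.ext hσ)
    exact sum_pos' (fun i _ => sq_nonneg _)
      ⟨i, mem_univ i, sq_pos_iff.2 (sub_ne_zero.2 (hx.injective.ne (Ne.symm hi)))⟩
  have hsq : ∑ i, b (σ i) ^ 2 = ∑ i, b i ^ 2 := Equiv.sum_comp σ fun i => b i ^ 2
  have hmul : ∑ i, b (σ i) * x (σ i) = ∑ i, b i * x i := Equiv.sum_comp σ fun i => b i * x i
  change _ < ∑ i, (b (σ i) - x (σ i) + x i) ^ 2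
  rw [hexpand, hsq, hmul]
  linarith

theorem sq_sum_sub_sum_sq_lt {m : ℕ} {b e : Fin m → ℕ} (hb : Antitone b)
    {σ : Equiv.Perm (Fin m)} (hσ : σ ≠ 1)
    (he : ∀ i, (e i : ℤ) = b (σ i) - (σ i : ℕ) + (i : ℕ)) :
    (∑ i, e i) ^ 2 - ∑ i, e i ^ 2 < (∑ i, b i) ^ 2 - ∑ i, b i ^ 2 := by
  have hsum : ∑ i, e i = ∑ i, b i := by
    zify
    simp only [he, sum_add_distrib, sum_sub_distrib]
    rw [Equiv.sum_comp σ fun i => (b i : ℤ), Equiv.sum_comp σ fun i => ((i : ℕ) : ℤ),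
      sub_add_cancel]
  have hlt : ∑ i, b i ^ 2 < ∑ i, e i ^ 2 := by
    zify
    simp only [he]
    exact sum_sq_lt_sum_sq_of_ne_one (Nat.mono_cast.comp_antitone hb) hσ
  have hle : ∑ i, e i ^ 2 ≤ (∑ i, e i) ^ 2 := sum_sq_le_sq_sum_of_nonneg fun _ _ => Nat.zero_le _
  rw [← hsum]
  omega

variable {R : Type*} [CommRing R]

theorem jacobiTrudi_eq_prod_add_sum (F : R⟦X⟧) (m : ℕ) (mu : ℕ → ℕ) :
    jacobiTrudi F m mu = ∏ i : Fin m, PowerSeries.coeff (mu i) F +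
      ∑ σ ∈ (univ : Finset (Equiv.Perm (Fin m))).erase 1, Equiv.Perm.sign σ •
        ∏ i, intCoeff ((mu (σ i) : ℤ) - (σ i : ℕ) + (i : ℕ)) F := by
  rw [jacobiTrudi, Matrix.det_apply, ← add_sum_erase _ _ (mem_univ 1)]
  simp

theorem prod_coeff_mem_span_schurDet {F : R⟦X⟧} (hF : PowerSeries.constantCoeff F = 1) {m : ℕ}
    (b : Fin m → ℕ) :
    ∏ i, PowerSeries.coeff (b i) F ∈ Submodule.span ℤ (schurDet F '' {mu | IsPartition mu}) := by
  -- Every other term in the expansion of the determinant of a sorted `b` has the same `∑ b i` and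
  -- a larger `∑ b i ^ 2`.
  induction hN : (∑ i, b i) ^ 2 - ∑ i, b i ^ 2 using Nat.strong_induction_on generalizing b with
  | _ N ih =>
  wlog hb : Antitone b generalizing b
  · let τ := Tuple.sort (OrderDual.toDual ∘ b)
    have hτ : Antitone (b ∘ τ) := Tuple.monotone_sort (OrderDual.toDual ∘ b)
    have hmeasure : (∑ i, (b ∘ τ) i) ^ 2 - ∑ i, (b ∘ τ) i ^ 2 = N := by
      rw [← hN, ← Equiv.sum_comp τ b, ← Equiv.sum_comp τ fun i => b i ^ 2]
      rfl
    rw [← Equiv.prod_comp τ]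
    exact this (b ∘ τ) hmeasure hτ
  subst hN
  obtain ⟨mu, hmu, hmub, hmum⟩ := exists_isPartition_extension hb
  have hdet : jacobiTrudi F m mu ∈ Submodule.span ℤ (schurDet F '' {mu | IsPartition mu}) := by
    rw [jacobiTrudi_eq_schurDet hF hmu hmum]
    exact Submodule.subset_span ⟨mu, hmu, rfl⟩
  rw [jacobiTrudi_eq_prod_add_sum] at hdet
  simp only [hmub] at hdet
  refine (Submodule.add_mem_iff_left _ (Submodule.sum_mem _ fun σ hσ => ?_)).1 hdet
  rw [Units.smul_def]
  refine Submodule.smul_mem _ _ ?_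
  by_cases hneg : ∃ i, (b (σ i) : ℤ) - (σ i : ℕ) + (i : ℕ) < 0
  · obtain ⟨i, hi⟩ := hneg
    rw [prod_eq_zero (mem_univ i) (intCoeff_of_neg hi F)]
    exact Submodule.zero_mem _
  · push Not at hneg
    choose e he using fun i => Int.eq_ofNat_of_zero_le (hneg i)
    simp only [he, intCoeff_natCast]
    exact ih _ (sq_sum_sub_sum_sq_lt hb (ne_of_mem_erase hσ) fun i => (he i).symm) e rfl

end Spanning

section GenericSeries

/-- The generating series `1 + c_1 t + c_2 t² + ⋯` of the variables of `ℤ[c_1,c_2,…]`. -/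
noncomputable def genericSeries : (MvPolynomial ℕ ℤ)⟦X⟧ := PowerSeries.mk fun d => cvar d

theorem constantCoeff_genericSeries : PowerSeries.constantCoeff genericSeries = 1 := by
  simp [genericSeries, cvar]

theorem coeff_succ_genericSeries (d : ℕ) : PowerSeries.coeff (d + 1) genericSeries = X d := by
  rw [genericSeries, PowerSeries.coeff_mk, cvar, if_neg (by omega), if_neg (by omega)]
  congr 1

theorem intCoeff_genericSeries (d : ℤ) : intCoeff d genericSeries = cvar d := by
  rcases lt_or_ge d 0 with hd | hd
  · rw [intCoeff_of_neg hd, cvar, if_pos hd]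
  · lift d to ℕ using hd
    rw [intCoeff_natCast, genericSeries, PowerSeries.coeff_mk]

theorem schurDet_genericSeries_conjP {lam : ℕ → ℕ} (h : IsPartition lam) :
    schurDet genericSeries (conjP lam) = SchurC lam := by
  rw [schurDet, conjP_conjP h]
  simp only [jacobiTrudi, SchurC, intCoeff_genericSeries]

theorem span_schurDet_genericSeries :
    Submodule.span ℤ (schurDet genericSeries '' {mu | IsPartition mu}) = ⊤ := by
  rw [eq_top_iff, ← Algebra.top_toSubmodule, ← adjoin_range_X, Algebra.adjoin_eq_span,
    Submodule.span_le]
  intro f hf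
  obtain ⟨L, hL, rfl⟩ := Submonoid.exists_list_of_mem_closure hf
  choose d hd using fun i : Fin L.length => hL _ (L.getElem_mem i.is_lt)
  rw [← Fin.prod_univ_getElem]
  simp only [← hd, ← coeff_succ_genericSeries]
  exact prod_coeff_mem_span_schurDet constantCoeff_genericSeries fun i => d i + 1

theorem conjP_mem_blockPartitions_iff {lam : ℕ → ℕ} (h : IsPartition lam) {n p : ℕ} :
    conjP lam ∈ blockPartitions n p ↔ ∀ l, l < p + 1 → n + 1 ≤ lam l := by
  simp only [blockPartitions, Set.mem_ofPred_eq, isPartition_conjP h, true_and, h.lt_conjP_iff]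
  exact ⟨fun hp l hl => hp.trans_le (h.antitone (Nat.lt_succ_iff.1 hl)),
    fun hlam => hlam p p.lt_succ_self⟩

theorem setOf_SchurC_eq_image_blockPartitions (n p : ℕ) :
    { S : MvPolynomial ℕ ℤ | ∃ lam : ℕ → ℕ, Antitone lam ∧
        (∃ N, ∀ k, N ≤ k → lam k = 0) ∧
        (∀ l, l < p + 1 → n + 1 ≤ lam l) ∧ S = SchurC lam } =
      schurDet genericSeries '' blockPartitions n p := by
  ext S
  constructor
  · rintro ⟨lam, hanti, hzero, hblock, rfl⟩
    have hlam : IsPartition lam := ⟨hanti, hzero⟩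
    exact ⟨conjP lam, (conjP_mem_blockPartitions_iff hlam).2 hblock,
      schurDet_genericSeries_conjP hlam⟩
  · rintro ⟨mu, hmu, rfl⟩
    have hlam := isPartition_conjP hmu.1
    refine ⟨conjP mu, hlam.antitone, hlam.eventually_zero, ?_, ?_⟩
    · rwa [← conjP_mem_blockPartitions_iff hlam, conjP_conjP hmu.1]
    · rw [← schurDet_genericSeries_conjP hlam, conjP_conjP hmu.1]

end GenericSeries

section Supersymmetrization

/-- The map `ρ : ℤ[c_1,c_2,…] → ℤ[x_1,…,x_n,y_1,…,y_p]`, `c_d ↦ c_d(B^p − A^n)`. -/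
noncomputable def supersymmetrization (n p : ℕ) :
    MvPolynomial ℕ ℤ →ₐ[ℤ] MvPolynomial (Fin n ⊕ Fin p) ℤ :=
  aeval fun d => cpoly n p (d + 1)

theorem map_supersymmetrization_genericSeries (n p : ℕ) :
    PowerSeries.map (supersymmetrization n p).toRingHom genericSeries = superSeries n p := by
  ext1 d
  cases d with
  | zero =>
    rw [← intCoeff_natCast, ← intCoeff_natCast, intCoeff_map, Nat.cast_zero, intCoeff_zero,
      intCoeff_zero, constantCoeff_genericSeries, constantCoeff_superSeries, map_one]
  | succ d =>
    rw [PowerSeries.coeff_map, coeff_succ_genericSeries, superSeries, PowerSeries.coeff_mk]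
    exact aeval_X _ d

theorem supersymmetrization_schurDet (n p : ℕ) (mu : ℕ → ℕ) :
    supersymmetrization n p (schurDet genericSeries mu) = schurDet (superSeries n p) mu := by
  rw [← map_supersymmetrization_genericSeries, map_schurDet]
  rfl

theorem schurDet_superSeries_eq_zero {n p : ℕ} {mu : ℕ → ℕ} (hmu : mu ∈ blockPartitions n p) :
    schurDet (superSeries n p) mu = 0 :=
  jacobiTrudi_eq_zero_of_mul_eq (superSeries_mul_chernPoly n p) (coeff_zero_chernPoly _)
    ((natDegree_chernPoly_le _).trans_eq (Fintype.card_fin n))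
    ((natDegree_chernPoly_le _).trans_eq (Fintype.card_fin p))
    (fun _ hk => hmu.2.trans_le (hmu.1.antitone hk))
    (hmu.1.lt_conjP_iff.2 (Nat.zero_lt_of_lt hmu.2))

theorem ker_supersymmetrization (n p : ℕ) :
    LinearMap.ker (supersymmetrization n p).toLinearMap =
      Submodule.span ℤ (schurDet genericSeries '' blockPartitions n p) := by
  refine ker_eq_span_image (s := hookPartitions n p) ?_ (fun mu hmu => ?_) ?_
  · rw [hookPartitions_union_blockPartitions, span_schurDet_genericSeries]
  · exact (supersymmetrization_schurDet n p mu).trans (schurDet_superSeries_eq_zero hmu)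
  · exact (linearIndepOn_schurDet_superSeries n p).congr fun mu _ =>
      (supersymmetrization_schurDet n p mu).symm

end Supersymmetrization

theorem kernel_of_supersymmetrization (n p : ℕ) (hn : 1 ≤ n) (hp : 1 ≤ p) :
    ∀ f : MvPolynomial ℕ ℤ,
      aeval (fun d : ℕ => cpoly n p (d + 1)) f = 0 ↔
        f ∈ Submodule.span ℤ
          { S : MvPolynomial ℕ ℤ | ∃ lam : ℕ → ℕ, Antitone lam ∧
              (∃ N, ∀ k, N ≤ k → lam k = 0) ∧
              (∀ l, l < p + 1 → n + 1 ≤ lam l) ∧ S = SchurC lam } := by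
  intro f
  rw [setOf_SchurC_eq_image_blockPartitions, ← ker_supersymmetrization]
  exact Iff.rfl
end
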